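/- (Convergence of the first flow) Let ρ > 0, let h : V → ℝ change sign with max_{x∈V} h(x) > 0, let u₀ : V → ℝ satisfy ∫_V h e^{u₀} dμ ≠ 0, and let u : V × [0, +∞) → ℝ be the (global, unique) solution of the first mean field flow ∂_t e^{u} = −Lu + ρ( h e^{u} / ∫_V h e^{u} dμ − 1/|V| ), u(·,0) = u₀, with ∫_V h e^{u(·,t)} dμ ≠ 0 for all t ≥ 0. Then there exists a function u_∞ : V → ℝ such that u(x,t) → u_∞(x) uniformly in x ∈ V as t → +∞, and u_∞ solves the fractional mean field equation Lu_∞(x) = ρ( h(x)e^{u_∞(x)} / ∫_V h e^{u_∞} dμ − 1/|V| ) for every x ∈ V. -/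

import Mathlib

open Real Finset

variable {V : Type*}

/-- Discrete integral: `∫_V f dμ = Σ_x μ(x) f(x)`. -/
noncomputable def intV [Fintype V] (μ f : V → ℝ) : ℝ := ∑ x, μ x * f x

/-- Volume `|V| = Σ_x μ(x)`. -/
noncomputable def volV [Fintype V] (μ : V → ℝ) : ℝ := ∑ x, μ x

/-- The nonlocal (fractional graph Laplacian type) operator
`Lu(x) = (1/μ(x)) Σ_{y ≠ x} W(x,y)(u(x) − u(y))`. -/
noncomputable def opL [Fintype V] [DecidableEq V] (μ : V → ℝ) (W : V → V → ℝ)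
    (u : V → ℝ) (x : V) : ℝ :=
  (1 / μ x) * ∑ y ∈ univ.filter (fun y => y ≠ x), W x y * (u x - u y)

/-- Gradient form `∇u·∇v(x) = (1/(2μ(x))) Σ_{y ≠ x} W(x,y)(u(x)−u(y))(v(x)−v(y))`. -/
noncomputable def gradForm [Fintype V] [DecidableEq V] (μ : V → ℝ) (W : V → V → ℝ)
    (u v : V → ℝ) (x : V) : ℝ :=
  (1 / (2 * μ x)) * ∑ y ∈ univ.filter (fun y => y ≠ x), W x y * (u x - u y) * (v x - v y)

/-- `|∇u|²(x) = ∇u·∇u(x)`. -/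
noncomputable def gradSq [Fintype V] [DecidableEq V] (μ : V → ℝ) (W : V → V → ℝ)
    (u : V → ℝ) (x : V) : ℝ := gradForm μ W u u x


/-!
The flow is the gradient flow of an energy whose sublevel sets at fixed mass are compact, so the
solution has bounded speed and its cluster points are critical points of the energy: solutions of
the mean field equation with the conserved mass. A curve with relatively compact range and only
countably many cluster points converges, so it suffices that there are countably many such
solutions. In suitable coordinates they satisfy a system `exp (q i) = l i q` with polynomials
`l i`. If it had uncountably many solutions, an uncountable set of them would be Zariski dense in
an irreducible variety along which the Jacobian of the system degenerates generically; a kernel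
vector is a nonzero derivation `D` of the function field with `D (l i) = l i * D (q i)`. A case of
Ax's theorem, proved by a residue computation after Rosenlicht, shows that there is none.
-/

section EtaleExtension

variable {R A B M : Type*} [CommRing R] [CommRing A] [CommRing B] [Algebra R A] [Algebra R B]
  [Algebra A B] [IsScalarTower R A B] [Algebra.FormallyEtale A B] [AddCommGroup M] [Module R M]
  [Module A M] [Module B M] [IsScalarTower A B M] [IsScalarTower R A M] [IsScalarTower R B M]

/-- The extension of a derivation of `A` to a formally étale `A`-algebra `B`, such as a localization
or a separable field extension. -/
noncomputable def etaleExtension (B : Type*) [CommRing B] [Algebra R B] [Algebra A B]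
    [IsScalarTower R A B] [Algebra.FormallyEtale A B] [Module B M] [IsScalarTower A B M]
    [IsScalarTower R B M] (d : Derivation R A M) : Derivation R B M :=
  ((d.liftKaehlerDifferential.liftBaseChange B) ∘ₗ
    (KaehlerDifferential.tensorKaehlerEquivOfFormallyEtale R A B).symm.toLinearMap).compDer
      (KaehlerDifferential.D R B)

theorem etaleExtension_algebraMap (d : Derivation R A M) (a : A) :
    etaleExtension B d (algebraMap A B a) = d a := by
  simp [etaleExtension, KaehlerDifferential.tensorKaehlerEquivOfFormallyEtale_symm_D_algebraMap]

end EtaleExtension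

section Residue

open scoped PowerSeries

variable {F L : Type*} [Field F] [Field L] [Algebra F⟦X⟧ L] [IsFractionRing F⟦X⟧ L]

theorem algebraMap_powerSeries_X_ne_zero : algebraMap F⟦X⟧ L PowerSeries.X ≠ 0 := by
  simp only [ne_eq, FaithfulSMul.algebraMap_eq_zero_iff, PowerSeries.X_ne_zero, not_false_eq_true]

theorem exists_eq_zpow_X_mul_unit {f : L} (hf : f ≠ 0) :
    ∃ (n : ℤ) (u : F⟦X⟧ˣ), f = algebraMap F⟦X⟧ L PowerSeries.X ^ n * algebraMap F⟦X⟧ L u := by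
  obtain ⟨p, q, hq, rfl⟩ := IsFractionRing.div_surjective F⟦X⟧ f
  have hp : p ≠ 0 := by rintro rfl; simp at hf
  obtain ⟨m, u, rfl⟩ := IsDiscreteValuationRing.eq_unit_mul_pow_irreducible hp
    PowerSeries.X_irreducible
  obtain ⟨n, v, rfl⟩ := IsDiscreteValuationRing.eq_unit_mul_pow_irreducible
    (nonZeroDivisors.ne_zero hq) PowerSeries.X_irreducible
  refine ⟨m - n, u * v⁻¹, ?_⟩
  rw [zpow_sub₀ algebraMap_powerSeries_X_ne_zero, Units.val_mul]
  simp only [map_mul, map_pow, zpow_natCast, map_units_inv]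
  ring

theorem exists_eq_div_X_pow (f : L) :
    ∃ p : F⟦X⟧, ∃ n : ℕ, f = algebraMap F⟦X⟧ L p / algebraMap F⟦X⟧ L PowerSeries.X ^ n := by
  rcases eq_or_ne f 0 with rfl | hf
  · exact ⟨0, 0, by rw [map_zero (algebraMap F⟦X⟧ L), zero_div]⟩
  obtain ⟨n, u, rfl⟩ := exists_eq_zpow_X_mul_unit (F := F) hf
  have hX := algebraMap_powerSeries_X_ne_zero (F := F) (L := L)
  refine ⟨PowerSeries.X ^ n.toNat * (u : F⟦X⟧), (-n).toNat, ?_⟩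
  rw [eq_div_iff (pow_ne_zero _ hX), map_mul, map_pow, ← zpow_natCast, ← zpow_natCast,
    mul_right_comm, ← zpow_add₀ hX]
  congr 2
  omega

variable [Algebra F L] {D : Derivation F L L}
  (hD : ∀ p : F⟦X⟧, D (algebraMap F⟦X⟧ L p) = algebraMap F⟦X⟧ L (PowerSeries.derivative F p))

include hD

omit [IsFractionRing F⟦X⟧ L] in
theorem deriv_powerSeries_X : D (algebraMap F⟦X⟧ L PowerSeries.X) = 1 := by
  rw [hD, PowerSeries.derivative_X, map_one]

theorem X_mul_logDeriv_zpow_X_mul_unit (n : ℤ) (u : F⟦X⟧ˣ) :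
    ∃ q : F⟦X⟧, algebraMap F⟦X⟧ L PowerSeries.X *
      (D (algebraMap F⟦X⟧ L PowerSeries.X ^ n * algebraMap F⟦X⟧ L u) /
        (algebraMap F⟦X⟧ L PowerSeries.X ^ n * algebraMap F⟦X⟧ L u)) =
      algebraMap F⟦X⟧ L (PowerSeries.C (n : F) + PowerSeries.X * q) := by
  refine ⟨PowerSeries.derivative F u * ↑u⁻¹, ?_⟩
  have hX := algebraMap_powerSeries_X_ne_zero (F := F) (L := L)
  have hu : algebraMap F⟦X⟧ L u ≠ 0 := (u.isUnit.map _).ne_zero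
  rw [D.leibniz, D.leibniz_zpow, deriv_powerSeries_X hD, hD, zpow_sub₀ hX]
  simp only [smul_eq_mul, zsmul_eq_mul, mul_one, map_add, map_mul, map_units_inv,
    map_intCast, zpow_one]
  field_simp
  ring

/-- `D f` has no residue: the coefficient of `X ^ n` in `X * D p - n * p` vanishes. -/
theorem eq_zero_of_X_mul_deriv_eq (G : L) (b : F) (q : F⟦X⟧)
    (hG : algebraMap F⟦X⟧ L PowerSeries.X * D G =
      algebraMap F⟦X⟧ L (PowerSeries.C b + PowerSeries.X * q)) : b = 0 := by
  obtain ⟨p, n, rfl⟩ := exists_eq_div_X_pow (F := F) G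
  have hX := algebraMap_powerSeries_X_ne_zero (F := F) (L := L)
  have hp : PowerSeries.X * PowerSeries.derivative F p - (n : F⟦X⟧) * p =
      PowerSeries.X ^ n * (PowerSeries.C b + PowerSeries.X * q) := by
    apply IsFractionRing.injective F⟦X⟧ L
    rw [map_mul, ← hG, D.leibniz_div, D.leibniz_pow, deriv_powerSeries_X hD, hD]
    rcases n with _ | n
    · simp
    · simp only [map_sub, map_mul, map_pow, map_natCast, smul_eq_mul, nsmul_eq_mul,
        add_tsub_cancel_right]
      field_simp
      ring
  have hb :
      PowerSeries.coeff n (PowerSeries.X ^ n * (PowerSeries.C b + PowerSeries.X * q)) = b := by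
    simpa using (PowerSeries.coeff_X_pow_mul (PowerSeries.C b + PowerSeries.X * q) n 0).trans
      (by simp : _ = b)
  rw [← hb, ← hp, map_sub, ← map_natCast PowerSeries.C, PowerSeries.coeff_C_mul]
  rcases n with _ | n
  · simp
  · rw [PowerSeries.coeff_succ_X_mul, PowerSeries.coeff_derivative]
    push_cast
    ring

/-- The residue of `D f / f` is the order of `f`, while `D G` has no residue. -/
theorem eq_unit_of_deriv_eq_sum_logDeriv [IsScalarTower F F⟦X⟧ L] [CharZero F] {ι : Type*}
    [Fintype ι] {β : ι → F}
    (hβ : LinearIndependent ℚ β) {N : ι → L} (hN : ∀ i, N i ≠ 0) {G : L}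
    (hG : D G = ∑ i, algebraMap F L (β i) * (D (N i) / N i)) (j : ι) :
    ∃ u : F⟦X⟧ˣ, N j = algebraMap F⟦X⟧ L u := by
  choose n u hNu using fun i => exists_eq_zpow_X_mul_unit (F := F) (hN i)
  choose q hq using fun i => X_mul_logDeriv_zpow_X_mul_unit hD (n i) (u i)
  have hres : ∑ i, (n i : ℚ) • β i = 0 := by
    refine eq_zero_of_X_mul_deriv_eq hD G _ (∑ i, PowerSeries.C (β i) * q i) ?_
    simp only [hG, mul_sum, map_sum, map_add, ← sum_add_distrib]
    refine sum_congr rfl fun i _ => ?_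
    rw [mul_left_comm, hNu i, hq i, IsScalarTower.algebraMap_apply F F⟦X⟧ L,
      PowerSeries.algebraMap_eq, Rat.smul_def]
    simp only [map_add, map_mul, Rat.cast_intCast]
    ring
  have hn : (n j : ℚ) = 0 := Fintype.linearIndependent_iff.1 hβ _ hres j
  refine ⟨u j, ?_⟩
  rw [hNu j, Int.cast_eq_zero.1 hn, zpow_zero, one_mul]

end Residue

section NormTrace

open Differential

variable {k K : Type*} [Field k] [CharZero k] [Field K] [Algebra k K] [FiniteDimensional k K]
  [Differential k] [Differential K] [DifferentialAlgebra k K]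

/-- The differential structure on the algebraic closure in which norms and traces are computed. -/
@[reducible]
noncomputable def algebraicClosureDifferential (k : Type*) [Field k] [CharZero k] [Differential k] :
    Differential (AlgebraicClosure k) :=
  have : Algebra.FormallyEtale k (AlgebraicClosure k) := .of_isSeparable _ _
  ⟨etaleExtension (AlgebraicClosure k)
    ((Algebra.linearMap k (AlgebraicClosure k)).compDer Differential.deriv)⟩

theorem differentialAlgebra_algebraicClosure (k : Type*) [Field k] [CharZero k] [Differential k] :
    letI := algebraicClosureDifferential k
    DifferentialAlgebra k (AlgebraicClosure k) :=
  have : Algebra.FormallyEtale k (AlgebraicClosure k) := .of_isSeparable _ _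
  letI := algebraicClosureDifferential k
  ⟨etaleExtension_algebraMap _⟩

theorem algHom_deriv_algebraicClosure (σ : K →ₐ[k] AlgebraicClosure k) (x : K) :
    letI := algebraicClosureDifferential k
    σ x′ = (σ x)′ := by
  let := algebraicClosureDifferential k
  have := differentialAlgebra_algebraicClosure k
  exact algHom_deriv' σ σ.injective x

theorem deriv_trace (x : K) : (Algebra.trace k K x)′ = Algebra.trace k K x′ := by
  let := algebraicClosureDifferential k
  have := differentialAlgebra_algebraicClosure k
  apply (algebraMap k (AlgebraicClosure k)).injective
  rw [← deriv_algebraMap, trace_eq_sum_embeddings, trace_eq_sum_embeddings, map_sum]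
  simp only [algHom_deriv_algebraicClosure]

theorem logDeriv_norm {x : K} (hx : x ≠ 0) :
    logDeriv (Algebra.norm k x) = Algebra.trace k K (logDeriv x) := by
  let := algebraicClosureDifferential k
  have := differentialAlgebra_algebraicClosure k
  apply (algebraMap k (AlgebraicClosure k)).injective
  rw [← logDeriv_algebraMap, Algebra.norm_eq_prod_embeddings, trace_eq_sum_embeddings,
    logDeriv_prod _ _ _ fun σ _ => (map_ne_zero σ).2 hx]
  simp only [Differential.logDeriv, map_div₀, algHom_deriv_algebraicClosure]

omit [Differential k] [Differential K] [DifferentialAlgebra k K] in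
theorem deriv_trace_eq_sum_logDeriv_norm {F : Type*} [Field F] [Algebra F k] [Algebra F K]
    [IsScalarTower F k K] (d : Derivation F k k) {ι : Type*} [Fintype ι] {β : ι → F} {y : ι → K}
    (hy : ∀ i, y i ≠ 0) {g : K}
    (hE : ∀ E : Derivation F K K, E g = ∑ i, algebraMap F K (β i) * (E (y i) / y i)) :
    d (Algebra.trace k K g) =
      ∑ i, algebraMap F k (β i) * (d (Algebra.norm k (y i)) / Algebra.norm k (y i)) := by
  have : Algebra.FormallyEtale k K := .of_isSeparable _ _
  obtain ⟨E, hEd⟩ : ∃ E : Derivation F K K, ∀ a, E (algebraMap k K a) = algebraMap k K (d a) :=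
    ⟨etaleExtension K ((Algebra.linearMap k K).compDer d), etaleExtension_algebraMap _⟩
  let : Differential k := ⟨d.restrictScalars ℤ⟩
  let : Differential K := ⟨E.restrictScalars ℤ⟩
  have : DifferentialAlgebra k K := ⟨hEd⟩
  calc d (Algebra.trace k K g) = Algebra.trace k K (E g) := deriv_trace g
    _ = ∑ i, algebraMap F k (β i) * Algebra.trace k K (E (y i) / y i) := by
      simp only [hE, map_sum, IsScalarTower.algebraMap_apply F k K, ← Algebra.smul_def, map_smul,
        smul_eq_mul]
    _ = _ := sum_congr rfl fun i _ => congrArg _ (logDeriv_norm (hy i)).symm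

end NormTrace

section FieldGeneration

theorem exists_transcendental_finiteDimensional {C K : Type*} [Field C] [Field K] [Algebra C K]
    [Algebra.EssFiniteType C K] {y : K} (hy : Transcendental C y) :
    ∃ F : IntermediateField C K, Transcendental F y ∧
      FiniteDimensional (IntermediateField.adjoin F {y}) K := by
  obtain ⟨t, hyt, ht⟩ := exists_isTranscendenceBasis_superset (R := C) (s := {y})
    ((algebraicIndependent_singleton_iff (x := ((↑) : ({y} : Set K) → K)) ⟨y, rfl⟩).2 hy)
  rw [Set.singleton_subset_iff] at hyt
  let F := IntermediateField.adjoin C (t \ {y})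
  refine ⟨F, ?_, ?_⟩
  · rw [IntermediateField.transcendental_adjoin_iff]
    have himage : Subtype.val '' {x : t | x ≠ ⟨y, hyt⟩} = t \ {y} := by
      ext x
      simp +contextual [Subtype.ext_iff, and_comm]
    rw [← himage]
    exact ht.1.transcendental_adjoin (i := ⟨y, hyt⟩) (by simp)
  · let E := (IntermediateField.adjoin F {y}).restrictScalars C
    have hE : E = IntermediateField.adjoin C (Set.range ((↑) : t → K)) :=
      (IntermediateField.adjoin_adjoin_left C _ _).trans (by
        rw [Set.sdiff_union_of_subset (Set.singleton_subset_iff.2 hyt), Subtype.range_coe])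
    have : Algebra.IsAlgebraic E K := hE ▸ ht.isAlgebraic_field
    have : Algebra.EssFiniteType E K := .of_comp C E K
    exact Algebra.finite_of_essFiniteType_of_isAlgebraic (F := E) (E := K)

end FieldGeneration

section Rosenlicht

open scoped Polynomial PowerSeries

theorem exists_derivation_isLocalization {R A : Type*} (B : Type*) [CommRing R] [CommRing A]
    [CommRing B] [Algebra R A] [Algebra R B] [Algebra A B] [IsScalarTower R A B] (S : Submonoid A)
    [IsLocalization S B] (d : Derivation R A A) :
    ∃ D : Derivation R B B, ∀ a, D (algebraMap A B a) = algebraMap A B (d a) :=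
  have : Algebra.FormallyEtale A B := .of_isLocalization S
  ⟨etaleExtension B ((Algebra.linearMap A B).compDer d), etaleExtension_algebraMap _⟩

theorem derivation_comp_eq_of_isFractionRing {R S A k L : Type*} [CommRing R] [CommRing S]
    [CommRing A] [Field k] [Field L] [Algebra R k] [Algebra S L] [Algebra A k] [IsFractionRing A k]
    {d : Derivation R k k} {D : Derivation S L L} {φ : k →+* L}
    (h : ∀ a, D (φ (algebraMap A k a)) = φ (d (algebraMap A k a))) (x : k) :
    D (φ x) = φ (d x) := by
  obtain ⟨a, b, -, rfl⟩ := IsFractionRing.div_surjective A x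
  simp only [map_div₀, Derivation.leibniz_div, h, smul_eq_mul, map_mul, map_sub, map_pow, map_inv₀]

theorem exists_derivation_ratFunc_embedding (F : Type*) [Field F] :
    ∃ (d : Derivation F (RatFunc F) (RatFunc F))
      (D : Derivation F (FractionRing F⟦X⟧) (FractionRing F⟦X⟧))
      (φ : RatFunc F →ₐ[F] FractionRing F⟦X⟧),
      (∀ p : F⟦X⟧, D (algebraMap _ _ p) = algebraMap _ _ (PowerSeries.derivative F p)) ∧
      φ RatFunc.X = algebraMap F⟦X⟧ _ PowerSeries.X ∧ ∀ r, D (φ r) = φ (d r) := by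
  obtain ⟨d, hd⟩ := exists_derivation_isLocalization (RatFunc F) (nonZeroDivisors F[X])
    Polynomial.derivative'
  obtain ⟨D, hD⟩ := exists_derivation_isLocalization (FractionRing F⟦X⟧) (nonZeroDivisors F⟦X⟧)
    (PowerSeries.derivative F)
  let ψ : F[X] →ₐ[F] FractionRing F⟦X⟧ :=
    (IsScalarTower.toAlgHom F F⟦X⟧ (FractionRing F⟦X⟧)).comp (Polynomial.coeToPowerSeries.algHom F)
  have hψ (p : F[X]) : ψ p = algebraMap F⟦X⟧ _ (p : F⟦X⟧) := by
    simp [ψ]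
  have hinj : Function.Injective ψ := fun p q hpq =>
    Polynomial.coe_injective F (IsFractionRing.injective F⟦X⟧ _ (by simpa only [hψ] using hpq))
  have hφ (p : F[X]) : IsFractionRing.liftAlgHom (K := RatFunc F) hinj (algebraMap _ _ p) =
      algebraMap F⟦X⟧ _ (p : F⟦X⟧) := by
    rw [IsFractionRing.liftAlgHom_apply, IsFractionRing.lift_algebraMap]; exact hψ p
  refine ⟨d, D, IsFractionRing.liftAlgHom hinj, hD, ?_, ?_⟩
  · rw [← RatFunc.algebraMap_X, hφ, Polynomial.coe_X]
  · refine derivation_comp_eq_of_isFractionRing (A := F[X])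
      (φ := (IsFractionRing.liftAlgHom hinj).toRingHom) fun p => ?_
    simp only [AlgHom.toRingHom_eq_coe, RingHom.coe_coe, hφ, hd, hD]
    rw [Polynomial.derivative'_apply, PowerSeries.derivative_coe]

theorem ne_algebraMap_ratFunc_X_of_deriv_eq {F K : Type*} [Field F] [Field K] [CharZero F]
    [Algebra F K] [Algebra (RatFunc F) K] [IsScalarTower F (RatFunc F) K]
    [FiniteDimensional (RatFunc F) K] {ι : Type*} [Fintype ι] {β : ι → F}
    (hβ : LinearIndependent ℚ β) {y : ι → K} (hy : ∀ i, y i ≠ 0) {g : K}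
    (hE : ∀ E : Derivation F K K, E g = ∑ i, algebraMap F K (β i) * (E (y i) / y i)) (j : ι) :
    y j ≠ algebraMap (RatFunc F) K RatFunc.X := by
  intro hj
  obtain ⟨d, D, φ, hD, hX, hφ⟩ := exists_derivation_ratFunc_embedding F
  have : CharZero (RatFunc F) := charZero_of_injective_algebraMap (algebraMap F _).injective
  obtain ⟨u, hu⟩ := eq_unit_of_deriv_eq_sum_logDeriv hD hβ (N := fun i => φ (Algebra.norm _ (y i)))
    (fun i => (map_ne_zero φ).2 (Algebra.norm_ne_zero_iff.2 (hy i))) (G := φ (Algebra.trace _ _ g))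
    (by simp only [hφ, deriv_trace_eq_sum_logDeriv_norm d hy hE, map_sum, map_mul, map_div₀,
      AlgHom.commutes]) j
  have hpow : (u : F⟦X⟧) = PowerSeries.X ^ Module.finrank (RatFunc F) K := by
    apply IsFractionRing.injective F⟦X⟧ (FractionRing F⟦X⟧)
    rw [← hu, hj, Algebra.norm_algebraMap, map_pow, map_pow, hX]
  exact PowerSeries.X_irreducible.not_isUnit
    ((isUnit_pow_iff Module.finrank_pos.ne').1 (hpow ▸ u.isUnit))

/-- Rosenlicht's theorem on linear combinations of logarithmic derivatives. -/
theorem isAlgebraic_of_deriv_eq_sum_logDeriv {C K : Type*} [Field C] [Field K] [CharZero C]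
    [Algebra C K] [Algebra.EssFiniteType C K] {ι : Type*} [Fintype ι] {β : ι → C}
    (hβ : LinearIndependent ℚ β) {y : ι → K} (hy : ∀ i, y i ≠ 0) {g : K}
    (hE : ∀ E : Derivation C K K, E g = ∑ i, algebraMap C K (β i) * (E (y i) / y i)) (j : ι) :
    IsAlgebraic C (y j) := by
  by_contra hj
  obtain ⟨F, hF, hfin⟩ := exists_transcendental_finiteDimensional (C := C) hj
  let e := RatFunc.algEquivOfTranscendental (y j) hF
  let : Algebra (RatFunc F) K := ((algebraMap (IntermediateField.adjoin F {y j}) K).comp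
    (e : RatFunc F →+* _)).toAlgebra
  have : IsScalarTower F (RatFunc F) K := .of_algebraMap_eq fun a =>
    (congrArg (algebraMap (IntermediateField.adjoin F {y j}) K) (e.commutes a)).symm
  have : FiniteDimensional (RatFunc F) K :=
    Module.Finite.of_equiv_equiv e.symm.toRingEquiv (RingEquiv.refl K) (by
      ext x
      exact congrArg (algebraMap (IntermediateField.adjoin F {y j}) K) (e.apply_symm_apply x))
  have : CharZero F := charZero_of_injective_algebraMap (algebraMap C F).injective
  refine ne_algebraMap_ratFunc_X_of_deriv_eq (F := F) (β := fun i => algebraMap C F (β i)) ?_ hy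
    (fun E => hE (E.restrictScalars C)) j ?_
  · exact hβ.map' (algebraMap C F).toAddMonoidHom.toRatLinearMap
      (LinearMap.ker_eq_bot.2 (algebraMap C F).injective)
  · exact (RatFunc.algEquivOfTranscendental_X (y j) hF).symm

end Rosenlicht

section ConstantField

variable {k K : Type*} [Field k] [Field K] [Algebra k K]

/-- The field of constants of a derivation. -/
def constantField (D : Derivation k K K) : IntermediateField k K where
  carrier := {a | D a = 0}
  mul_mem' {a b} (ha : D a = 0) (hb : D b = 0) := by
    simp only [Set.mem_ofPred_eq, D.leibniz, ha, hb, smul_zero, add_zero]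
  add_mem' {a b} (ha : D a = 0) (hb : D b = 0) := by
    simp only [Set.mem_ofPred_eq, map_add, ha, hb, add_zero]
  algebraMap_mem' := D.map_algebraMap
  inv_mem' a (ha : D a = 0) := by
    simp only [Set.mem_ofPred_eq, D.leibniz_inv, ha, smul_zero]

theorem mem_constantField {D : Derivation k K K} {a : K} : a ∈ constantField D ↔ D a = 0 := Iff.rfl

theorem derivation_eq_zero_of_adjoin_eq_top {D : Derivation k K K} {S : Set K}
    (hS : IntermediateField.adjoin k S = ⊤) (hD : ∀ a ∈ S, D a = 0) : D = 0 := by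
  have hle : ⊤ ≤ constantField D := hS ▸ IntermediateField.adjoin_le_iff.2 hD
  ext a
  exact hle (IntermediateField.mem_top (x := a))

theorem derivation_apply_eq_zero_of_isAlgebraic [CharZero k] (D : Derivation k K K) {a : K}
    (ha : IsAlgebraic k a) : D a = 0 := by
  have hsep : (minpoly k a).Separable := (minpoly.irreducible ha.isIntegral).separable
  have hroot := D.map_aeval (minpoly k a) a
  rw [minpoly.aeval, map_zero] at hroot
  exact (smul_eq_zero.1 hroot.symm).resolve_left
    (hsep.aeval_derivative_ne_zero (minpoly.aeval k a))

/-- A derivation, regarded as linear over its constants. -/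
def constantFieldDerivation (D : Derivation k K K) : Derivation (constantField D) K K where
  toFun := D
  map_add' := map_add D
  map_smul' c a := by
    rw [IntermediateField.smul_def, smul_eq_mul, D.leibniz, mem_constantField.1 c.2, smul_zero,
      add_zero]
    rfl
  map_one_eq_zero' := D.map_one_eq_zero
  leibniz' := D.leibniz

theorem derivation_prod_zpow_div {ι : Type*} [Fintype ι] (D : Derivation k K K) {l : ι → K}
    (hl : ∀ i, l i ≠ 0) (n : ι → ℤ) :
    D (∏ i, l i ^ n i) / ∏ i, l i ^ n i = ∑ i, (n i : K) * (D (l i) / l i) := by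
  let : Differential K := ⟨D.restrictScalars ℤ⟩
  refine (Differential.logDeriv_prod ι univ _ fun i _ => zpow_ne_zero _ (hl i)).trans
    (sum_congr rfl fun i _ => ?_)
  change D (l i ^ n i) / l i ^ n i = _
  rw [D.leibniz_zpow, zpow_sub_one₀ (hl i)]
  simp only [zsmul_eq_mul, smul_eq_mul]
  field_simp [hl i]

/-- Subtracting from a vector a multiple of its derivative, once an entry is normalised to `1`,
decreases its support; so does differentiating it. -/
theorem mem_span_constant_of_stable {ι : Type*} [Finite ι] (D : Derivation k K K)
    {M : Submodule K (ι → K)} (hM : ∀ v ∈ M, (fun i => D (v i)) ∈ M) {v : ι → K} (hv : v ∈ M) :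
    v ∈ Submodule.span K {w | w ∈ M ∧ ∀ i, D (w i) = 0} := by
  induction hn : v.support.ncard using Nat.strong_induction_on generalizing v with | _ n ih
  subst hn
  rcases v.support.eq_empty_or_nonempty with h0 | ⟨i, hi⟩
  · rw [Function.support_eq_empty_iff.1 h0]
    exact zero_mem _
  have hsmall {w : ι → K} (hw : w ∈ M) (hvw : ∀ m, v m = 0 → w m = 0) {m : ι} (hvm : v m ≠ 0)
      (hwm : w m = 0) : w ∈ Submodule.span K {w | w ∈ M ∧ ∀ i, D (w i) = 0} :=
    ih _ (Set.ncard_lt_ncard ⟨fun m hm => mt (hvw m) hm, fun h => h hvm hwm⟩) hw rfl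
  obtain ⟨g, hg⟩ : ∃ g, g = (v i)⁻¹ • v := ⟨_, rfl⟩
  have hgM : g ∈ M := hg ▸ M.smul_mem _ hv
  have hg0 (m : ι) (hm : v m = 0) : g m = 0 := by
    rw [hg, Pi.smul_apply, hm, smul_zero]
  have hgi : g i = 1 := by
    rw [hg, Pi.smul_apply, smul_eq_mul, inv_mul_cancel₀ hi]
  suffices hspan : g ∈ Submodule.span K {w | w ∈ M ∧ ∀ i, D (w i) = 0} by
    rw [hg] at hspan
    exact (Submodule.smul_mem_iff _ (inv_ne_zero hi)).1 hspan
  by_cases hconst : ∀ m, D (g m) = 0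
  · exact Submodule.subset_span ⟨hgM, hconst⟩
  push Not at hconst
  obtain ⟨j, hj⟩ := hconst
  have hDg := hsmall (hM g hgM) (fun m hm => by rw [hg0 m hm, map_zero]) hi
    (by rw [hgi, D.map_one_eq_zero])
  have hvj : v j ≠ 0 := fun h => hj (by rw [hg0 j h, map_zero])
  have hsub := hsmall (sub_mem hgM (M.smul_mem (g j / D (g j)) (hM g hgM)))
    (fun m hm => by simp [hg0 m hm]) hvj (by simp [hj])
  exact (Submodule.sub_mem_iff_left _ (Submodule.smul_mem _ _ hDg)).1 hsub

end ConstantField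

theorem exists_linearIndependent_sum_intCast_mul {C ι : Type*} [Field C] [CharZero C] [Finite ι]
    (f : ι → C) : ∃ (m : ℕ) (β : Fin m → C) (n : ι → Fin m → ℤ), LinearIndependent ℚ β ∧
      ∀ i, f i = ∑ j, (n i j : C) * β j := by
  let N := Submodule.span ℤ (Set.range f)
  have : Module.Finite ℤ N := Module.Finite.span_of_finite ℤ (Set.finite_range f)
  let b := Module.finBasis ℤ N
  have hb : LinearIndependent ℤ fun j => (b j : C) :=
    b.linearIndependent.map' N.subtype N.ker_subtype
  refine ⟨_, fun j => b j, fun i => b.repr ⟨f i, Submodule.subset_span ⟨i, rfl⟩⟩,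
    (LinearIndependent.iff_fractionRing ℤ ℚ).1 hb, fun i => ?_⟩
  have hrepr := congrArg Subtype.val (b.sum_repr ⟨f i, Submodule.subset_span ⟨i, rfl⟩⟩)
  simpa only [AddSubmonoidClass.coe_finsetSum, SetLike.val_smul, zsmul_eq_mul] using hrepr.symm

section Ax

variable {C K : Type*} [Field C] [Field K] [Algebra C K] {ι : Type*} {x l : ι → K}

/-- The defect of the differential equation `E l = l * E x`, as a function of the derivation `E`. -/
def expDefect (x l : ι → K) : Derivation C K K →ₗ[K] ι → K where
  toFun E i := E (x i) - E (l i) / l i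
  map_add' E F := by
    ext i
    simp only [Derivation.add_apply, Pi.add_apply]
    ring
  map_smul' a E := by
    ext i
    simp only [Derivation.smul_apply, Pi.smul_apply, smul_eq_mul, RingHom.id_apply]
    ring

theorem expDefect_apply (E : Derivation C K K) (i : ι) :
    expDefect x l E i = E (x i) - E (l i) / l i := rfl

theorem expDefect_commutator (hl : ∀ i, l i ≠ 0) {D : Derivation C K K}
    (hD : ∀ i, D (l i) = l i * D (x i)) (E : Derivation C K K) (i : ι) :
    expDefect x l ⁅D, E⁆ i = D (expDefect x l E i) := by
  have hli := hl i
  simp only [expDefect_apply, map_sub, Derivation.commutator_apply, Derivation.leibniz_div, hD,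
    Derivation.leibniz, smul_eq_mul]
  field_simp
  ring

variable [Fintype ι]

theorem sum_mul_intCast_combination {m : ℕ} {β : Fin m → C} {n : ι → Fin m → ℤ} {f : ι → C}
    (hf : ∀ i, f i = ∑ j, (n i j : C) * β j) (z : ι → K) :
    ∑ i, algebraMap C K (f i) * z i =
      ∑ j, algebraMap C K (β j) * ∑ i, (n i j : K) * z i := by
  simp only [hf, map_sum, map_mul, map_intCast, mul_sum, sum_mul]
  rw [sum_comm]
  exact sum_congr rfl fun j _ => sum_congr rfl fun i _ => by ring

/-- With `f i = ∑ j, n i j * β j`, Rosenlicht's theorem applies to `∏ i, l i ^ n i j` and shows that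
these products, hence also `∑ i, n i j * x i`, are constants of `D`. -/
theorem sum_algebraMap_mul_deriv_eq_zero [CharZero C] [Algebra.EssFiniteType C K]
    {D : Derivation C K K} (hC : ∀ a, D a = 0 → a ∈ Set.range (algebraMap C K))
    (hl : ∀ i, l i ≠ 0) (hD : ∀ i, D (l i) = l i * D (x i)) {f : ι → C}
    (hf : ∀ E : Derivation C K K, ∑ i, algebraMap C K (f i) * expDefect x l E i = 0)
    (E : Derivation C K K) : ∑ i, algebraMap C K (f i) * E (x i) = 0 := by
  obtain ⟨m, β, n, hβ, hfβ⟩ := exists_linearIndependent_sum_intCast_mul f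
  let y (j : Fin m) : K := ∏ i, l i ^ n i j
  have hy (j : Fin m) : y j ≠ 0 := prod_ne_zero_iff.2 fun i _ => zpow_ne_zero _ (hl i)
  have hEy (E : Derivation C K K) (j : Fin m) :
      E (y j) / y j = ∑ i, (n i j : K) * (E (l i) / l i) :=
    derivation_prod_zpow_div E hl fun i => n i j
  have hlin (E : Derivation C K K) (j : Fin m) :
      E (∑ i, (n i j : K) * x i) = ∑ i, (n i j : K) * E (x i) := by
    simp only [map_sum, ← zsmul_eq_mul, map_zsmul]
  have halg (j : Fin m) : IsAlgebraic C (y j) := by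
    refine isAlgebraic_of_deriv_eq_sum_logDeriv (g := ∑ i, algebraMap C K (f i) * x i) hβ hy
      (fun E => ?_) j
    have hE := hf E
    simp only [expDefect_apply, mul_sub, sum_sub_distrib, sub_eq_zero] at hE
    simp only [hEy]
    rw [← sum_mul_intCast_combination hfβ, ← hE]
    simp only [map_sum, ← Algebra.smul_def, Derivation.map_smul]
  rw [sum_mul_intCast_combination hfβ]
  refine sum_eq_zero fun j _ => ?_
  have hDj : D (∑ i, (n i j : K) * x i) = 0 := by
    have hDy := hEy D j
    rw [derivation_apply_eq_zero_of_isAlgebraic D (halg j), zero_div] at hDy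
    rw [hlin, hDy]
    exact sum_congr rfl fun i _ => by rw [hD, mul_div_cancel_left₀ _ (hl i)]
  obtain ⟨c, hc⟩ := hC _ hDj
  rw [← hlin, ← hc, E.map_algebraMap, mul_zero]

theorem sum_mul_deriv_eq_zero [CharZero C] [Algebra.EssFiniteType C K]
    {D : Derivation C K K} (hC : ∀ a, D a = 0 → a ∈ Set.range (algebraMap C K))
    (hl : ∀ i, l i ≠ 0) (hD : ∀ i, D (l i) = l i * D (x i)) {f : ι → K}
    (hf : ∀ E : Derivation C K K, f ⬝ᵥ expDefect x l E = 0) (E : Derivation C K K) :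
    f ⬝ᵥ (fun i => E (x i)) = 0 := by
  let M : Submodule K (ι → K) :=
    { carrier := {f | ∀ E : Derivation C K K, f ⬝ᵥ expDefect x l E = 0}
      zero_mem' := fun E => zero_dotProduct _
      add_mem' := fun hf hg E => by rw [add_dotProduct, hf, hg, add_zero]
      smul_mem' := fun a f hf E => by rw [smul_dotProduct, hf, smul_zero] }
  have hM : ∀ f ∈ M, (fun i => D (f i)) ∈ M := fun f hf E => by
    have hDE : f ⬝ᵥ expDefect x l ⁅D, E⁆ = 0 := hf _
    have hDf := congrArg D (hf E)
    simpa only [dotProduct, map_sum, D.leibniz, smul_eq_mul, ← expDefect_commutator hl hD,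
      sum_add_distrib, map_zero, (show ∑ i, f i * expDefect x l ⁅D, E⁆ i = 0 from hDE), zero_add,
      mul_comm] using hDf
  have hfspan := mem_span_constant_of_stable D hM (v := f) hf
  clear hf
  induction hfspan using Submodule.span_induction with
  | mem g hg =>
    choose c hc using fun i => hC _ (hg.2 i)
    obtain rfl : (fun i => algebraMap C K (c i)) = g := funext hc
    exact sum_algebraMap_mul_deriv_eq_zero hC hl hD hg.1 E
  | zero => exact zero_dotProduct _
  | add f g _ _ hf hg => rw [add_dotProduct, hf, hg, add_zero]
  | smul a f _ hf => rw [smul_dotProduct, hf, smul_zero]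

omit [Fintype ι] in
theorem derivation_eq_zero_of_expDefect_eq_zero [Finite ι] [CharZero C]
    {D : Derivation C K K} (hC : ∀ a, D a = 0 → a ∈ Set.range (algebraMap C K))
    (hx : IntermediateField.adjoin C (Set.range x) = ⊤)
    (hl : ∀ i, l i ≠ 0) (hD : ∀ i, D (l i) = l i * D (x i)) : D = 0 := by
  have := Fintype.ofFinite ι
  have : Algebra.EssFiniteType C K := IntermediateField.fg_top_iff.1
    (hx ▸ IntermediateField.fg_adjoin_of_finite (Set.finite_range x))
  let ev : Derivation C K K →ₗ[K] ι → K :=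
    LinearMap.pi fun i => ⟨⟨fun E => E (x i), fun _ _ => rfl⟩, fun _ _ => rfl⟩
  have hev : Function.Injective ev := (injective_iff_map_eq_zero ev).2 fun E hE =>
    derivation_eq_zero_of_adjoin_eq_top hx (by rintro _ ⟨i, rfl⟩; exact congrFun hE i)
  have : FiniteDimensional K (Derivation C K K) := .of_injective ev hev
  have hrange : LinearMap.range ev ≤ LinearMap.range (expDefect x l (C := C)) := by
    rintro _ ⟨E, rfl⟩
    by_contra hE
    obtain ⟨F, hFE, hF⟩ := Submodule.exists_le_ker_of_notMem hE
    classical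
    obtain ⟨f, rfl⟩ := (dotProductEquiv K ι).surjective F
    exact hFE (sum_mul_deriv_eq_zero hC hl hD (fun E => hF ⟨E, rfl⟩) E)
  have hinj : Function.Injective (expDefect x l (C := C)) := by
    have hrank := LinearMap.finrank_range_add_finrank_ker (expDefect x l (C := C))
    have hle := Submodule.finrank_mono hrange
    rw [LinearMap.finrank_range_of_inj hev] at hle
    exact LinearMap.ker_eq_bot.1 (Submodule.finrank_eq_zero.1 (by omega))
  refine hinj ?_
  ext i
  rw [expDefect_apply, hD, mul_div_cancel_left₀ _ (hl i), sub_self, map_zero, Pi.zero_apply]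

omit [Fintype ι] in
/-- A case of Ax's theorem: if `x` generates the field, then `x` and `exp x` are not algebraically
dependent along a nontrivial derivation. -/
theorem derivation_eq_zero_of_deriv_eq_mul [Finite ι] [CharZero C] {D : Derivation C K K}
    (hx : IntermediateField.adjoin C (Set.range x) = ⊤)
    (hl : ∀ i, l i ≠ 0) (hD : ∀ i, D (l i) = l i * D (x i)) : D = 0 := by
  have : CharZero (constantField D) :=
    charZero_of_injective_algebraMap (algebraMap C (constantField D)).injective
  have hx' : IntermediateField.adjoin (constantField D) (Set.range x) = ⊤ :=
    IntermediateField.restrictScalars_injective C <| top_le_iff.1 <| hx ▸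
      IntermediateField.adjoin_le_iff.2
        (IntermediateField.subset_adjoin (constantField D) (Set.range x))
  have hzero : constantFieldDerivation D = 0 :=
    derivation_eq_zero_of_expDefect_eq_zero (fun a ha => ⟨⟨a, ha⟩, rfl⟩) hx' hl hD
  ext a
  exact DFunLike.congr_fun hzero a

end Ax

section ExpPolynomial

open MvPolynomial Matrix

theorem derivation_eq_zero_of_deriv_eq_mul_of_isDomain {k A : Type*} [Field k] [CharZero k]
    [CommRing A] [IsDomain A] [Algebra k A] {ι : Type*} [Finite ι] {x l : ι → A}
    {D : Derivation k A A} (hx : Algebra.adjoin k (Set.range x) = ⊤) (hl : ∀ i, l i ≠ 0)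
    (hD : ∀ i, D (l i) = l i * D (x i)) : D = 0 := by
  let K := FractionRing A
  obtain ⟨D', hD'⟩ := exists_derivation_isLocalization K (nonZeroDivisors A) D
  have hgen : IntermediateField.adjoin k (Set.range fun i => algebraMap A K (x i)) = ⊤ := by
    have hA (a : A) : algebraMap A K a ∈
        IntermediateField.adjoin k (Set.range fun i => algebraMap A K (x i)) := by
      have hmem : algebraMap A K a ∈ (⊤ : Subalgebra k A).map (IsScalarTower.toAlgHom k A K) :=
        ⟨a, Algebra.mem_top, rfl⟩
      rw [← hx, AlgHom.map_adjoin, ← Set.range_comp] at hmem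
      exact IntermediateField.algebra_adjoin_le_adjoin k _ hmem
    refine eq_top_iff.2 fun z _ => ?_
    obtain ⟨a, b, -, rfl⟩ := IsFractionRing.div_surjective A z
    exact div_mem (hA a) (hA b)
  have hzero : D' = 0 := derivation_eq_zero_of_deriv_eq_mul
    (l := fun i => algebraMap A K (l i)) hgen
    (fun i => (map_ne_zero_iff _ (IsFractionRing.injective A K)).2 (hl i))
    (fun i => by simp only [hD', hD, map_mul])
  ext a
  apply IsFractionRing.injective A K
  rw [← hD', hzero, Derivation.zero_apply, Derivation.zero_apply, map_zero]

theorem exists_mul_eq_smul_one_of_mulVec_injective {A : Type*} [CommRing A] [IsDomain A]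
    {ι κ : Type*} [Fintype ι] [DecidableEq ι] [Fintype κ] {M : Matrix κ ι A}
    (hM : ∀ w, M *ᵥ w = 0 → w = 0) : ∃ (δ : A) (N : Matrix ι κ A), δ ≠ 0 ∧ N * M = δ • 1 := by
  classical
  let K := FractionRing A
  let MK : Matrix κ ι K := M.map (algebraMap A K)
  have hMK : LinearMap.ker (toLin' MK) = ⊥ := by
    refine LinearMap.ker_eq_bot'.2 fun v hv => ?_
    obtain ⟨b, hb⟩ := IsLocalization.exist_integer_multiples_of_finite (nonZeroDivisors A) v
    choose w hw using hb
    have hwv : (fun i => algebraMap A K (w i)) = (b : A) • v := funext hw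
    have hMw : M *ᵥ w = 0 := by
      ext r
      apply IsFractionRing.injective A K
      have hMv : MK *ᵥ v = 0 := hv
      have hMb : MK *ᵥ ((b : A) • v) = 0 := by rw [mulVec_smul, hMv, smul_zero]
      rw [RingHom.map_mulVec, Pi.zero_apply, map_zero]
      change (MK *ᵥ (fun i => algebraMap A K (w i))) r = 0
      rw [hwv, hMb, Pi.zero_apply]
    have hbv : (b : A) • v = 0 := by
      rw [← hwv, hM w hMw]
      exact funext fun _ => map_zero _
    exact (smul_eq_zero.1 hbv).resolve_left (nonZeroDivisors.ne_zero b.2)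
  obtain ⟨g, hg⟩ := LinearMap.exists_leftInverse_of_injective _ hMK
  have hgM : LinearMap.toMatrix' g * MK = 1 := by
    rw [← LinearMap.toMatrix'_toLin' MK, ← LinearMap.toMatrix'_comp, hg, LinearMap.toMatrix'_id]
  obtain ⟨b, hb⟩ := IsLocalization.exist_integer_multiples_of_finite (nonZeroDivisors A)
    (fun p : ι × κ => LinearMap.toMatrix' g p.1 p.2)
  choose n hn using hb
  refine ⟨b, of fun i r => n (i, r), nonZeroDivisors.ne_zero b.2, ?_⟩
  apply Matrix.map_injective (IsFractionRing.injective A K)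
  have hN : (of fun i r => n (i, r)).map (algebraMap A K) = (b : A) • LinearMap.toMatrix' g := by
    ext i r
    exact hn (i, r)
  change ((of fun i r => n (i, r)) * M).map (algebraMap A K) = ((b : A) • 1 : Matrix ι ι A).map _
  rw [Matrix.map_mul, hN, smul_mul, hgM]
  ext i j
  simp only [Matrix.map_apply, Matrix.smul_apply, Matrix.one_apply, smul_eq_mul, mul_ite, mul_one,
    mul_zero, smul_ite, smul_zero, apply_ite (algebraMap A K), map_zero,
    Algebra.smul_def (b : A) (1 : K)]

theorem mkDerivation_eq_sum_pderiv_smul {R M ι : Type*} [CommSemiring R] [AddCommMonoid M]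
    [Module R M] [Fintype ι] [Module (MvPolynomial ι R) M] [IsScalarTower R (MvPolynomial ι R) M]
    (v : ι → M) (p : MvPolynomial ι R) : mkDerivation R v p = ∑ j, pderiv j p • v j := by
  classical
  have hsum : mkDerivation R v =
      ∑ j, (LinearMap.toSpanSingleton (MvPolynomial ι R) M (v j)).compDer (pderiv j) := by
    refine derivation_ext fun i => ?_
    rw [← Derivation.coeFnAddMonoidHom_apply (∑ j, _), map_sum]
    simp [pderiv_X, Pi.single_apply]
  rw [hsum, ← Derivation.coeFnAddMonoidHom_apply (∑ j, _), map_sum]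
  simp

variable {ι κ : Type*} [Fintype ι] [DecidableEq ι]

/-- The Jacobian matrix of the equations `exp (x i) = l i` and `G r = 0`, in which `exp (x i)` has
been replaced by `l i`. -/
noncomputable def expJacobian {k : Type*} [CommRing k] (l : ι → MvPolynomial ι k)
    (G : κ → MvPolynomial ι k) : Matrix (ι ⊕ κ) ι (MvPolynomial ι k) :=
  fromRows (diagonal l - of fun i j => pderiv j (l i)) (of fun r j => pderiv j (G r))

theorem expJacobian_map_mulVec {k A : Type*} [CommRing k] [CommRing A] (l : ι → MvPolynomial ι k)
    (G : κ → MvPolynomial ι k) (φ : MvPolynomial ι k →+* A) (w : ι → A) :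
    (expJacobian l G).map φ *ᵥ w = Sum.elim
      (fun i => φ (l i) * w i - ∑ j, φ (pderiv j (l i)) * w j)
      (fun r => ∑ j, φ (pderiv j (G r)) * w j) := by
  rw [expJacobian, fromRows_map, fromRows_mulVec, Matrix.map_sub φ (map_sub φ), sub_mulVec,
    diagonal_map (map_zero φ)]
  congr 1
  ext i
  rw [Pi.sub_apply, mulVec_diagonal]
  rfl

/-- A vector in the kernel is a derivation `D` of the quotient with `D (l i) = l i * D (X i)`. -/
theorem eq_zero_of_expJacobian_map_mulVec_eq_zero {k : Type*} [Field k] [CharZero k]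
    {l : ι → MvPolynomial ι k} {G : κ → MvPolynomial ι k} {I : Ideal (MvPolynomial ι k)} [I.IsPrime]
    (hl : ∀ i, l i ∉ I) (hG : Ideal.span (Set.range G) = I) {w : ι → MvPolynomial ι k ⧸ I}
    (hw : (expJacobian l G).map (Ideal.Quotient.mk I) *ᵥ w = 0) : w = 0 := by
  rw [expJacobian_map_mulVec] at hw
  have hmk : Function.Surjective (Ideal.Quotient.mkₐ k I) := Ideal.Quotient.mkₐ_surjective k I
  choose v hv using fun i => hmk (w i)
  let d := mkDerivation k v
  have hd (p : MvPolynomial ι k) :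
      Ideal.Quotient.mkₐ k I (d p) = ∑ j, Ideal.Quotient.mk I (pderiv j p) * w j := by
    simp only [d, mkDerivation_eq_sum_pderiv_smul, map_sum, smul_eq_mul, map_mul, hv,
      Ideal.Quotient.mkₐ_eq_mk]
  have hdI (p : MvPolynomial ι k) (hp : Ideal.Quotient.mkₐ k I p = 0) :
      Ideal.Quotient.mkₐ k I (d p) = 0 := by
    rw [Ideal.Quotient.mkₐ_eq_mk, Ideal.Quotient.eq_zero_iff_mem, ← hG] at hp
    induction hp using Submodule.span_induction with
    | mem p hp =>
      obtain ⟨r, rfl⟩ := hp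
      rw [hd]
      exact congrFun hw (Sum.inr r)
    | zero => rw [map_zero, map_zero]
    | add p q _ _ hp hq => rw [map_add, map_add, hp, hq, add_zero]
    | smul a p hp hdp =>
      have hpI : Ideal.Quotient.mkₐ k I p = 0 := Ideal.Quotient.eq_zero_iff_mem.2 (hG ▸ hp)
      simp only [smul_eq_mul, d.leibniz, map_add, map_mul, hdp, hpI, mul_zero, zero_mul, add_zero]
  have hDX (i : ι) : Derivation.liftOfSurjective hmk hdI (Ideal.Quotient.mkₐ k I (X i)) = w i := by
    rw [Derivation.liftOfSurjective_apply, mkDerivation_X, hv]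
  have hzero : Derivation.liftOfSurjective hmk hdI = 0 := by
    refine derivation_eq_zero_of_deriv_eq_mul_of_isDomain
      (x := fun i => Ideal.Quotient.mkₐ k I (X i)) (l := fun i => Ideal.Quotient.mkₐ k I (l i))
      ?_ (fun i => mt Ideal.Quotient.eq_zero_iff_mem.1 (hl i)) fun i => ?_
    · rw [Set.range_comp' (Ideal.Quotient.mkₐ k I) X, ← AlgHom.map_adjoin, adjoin_range_X,
        Algebra.map_top, (AlgHom.range_eq_top _).2 hmk]
    · rw [hDX, Derivation.liftOfSurjective_apply, hd]
      exact (sub_eq_zero.1 (congrFun hw (Sum.inl i))).symm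
  ext i
  rw [← hDX, hzero, Derivation.zero_apply, Pi.zero_apply]

theorem hasFDerivAt_eval {𝕜 ι : Type*} [NontriviallyNormedField 𝕜] [Fintype ι]
    (p : MvPolynomial ι 𝕜) (q : ι → 𝕜) :
    HasFDerivAt (fun x => eval x p) (∑ j, eval q (pderiv j p) •
      ContinuousLinearMap.proj (R := 𝕜) (φ := fun _ : ι => 𝕜) j) q := by
  classical
  induction p using MvPolynomial.induction_on with
  | C a =>
    refine ((hasFDerivAt_const a q).congr_fderiv ?_).congr_of_eventuallyEq
      (.of_forall fun _ => eval_C a)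
    ext1 w
    simp [_root_.sum_apply]
  | add p r hp hr =>
    simp only [map_add]
    refine (hp.add hr).congr_fderiv ?_
    ext1 w
    simp [_root_.sum_apply, add_mul, sum_add_distrib]
  | mul_X p i hp =>
    simp only [map_mul, eval_X]
    refine (hp.mul (hasFDerivAt_apply i q)).congr_fderiv ?_
    ext1 w
    simp [_root_.sum_apply, add_mul, sum_add_distrib, mul_sum, mul_assoc, Pi.single_apply,
      apply_ite (eval q)]

theorem countable_of_injective_hasFDerivAt {𝕜 E F : Type*} [NontriviallyNormedField 𝕜]
    [CompleteSpace 𝕜] [NormedAddCommGroup E] [NormedSpace 𝕜 E] [FiniteDimensional 𝕜 E]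
    [SecondCountableTopology E]
    [NormedAddCommGroup F] [NormedSpace 𝕜 F] {f : E → F} {f' : E → E →L[𝕜] F} {T : Set E} {c : F}
    (hf : ∀ q ∈ T, HasFDerivAt f (f' q) q) (hinj : ∀ q ∈ T, Function.Injective (f' q))
    (hc : ∀ q ∈ T, f q = c) : T.Countable := by
  have : DiscreteTopology T := by
    refine discreteTopology_subtype_iff.2 fun q hq => Filter.inf_principal_eq_bot.2 ?_
    obtain ⟨K, -, hK⟩ := LinearMap.exists_antilipschitzWith (f' q : E →ₗ[𝕜] F)
      (LinearMap.ker_eq_bot.2 (hinj q hq))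
    filter_upwards [(hf q hq).eventually_ne (c := c) ⟨K, hK⟩] with z hz hzT
    exact hz (hc z hzT)
  exact Set.countable_coe_iff.1 countable_of_Lindelof_of_discrete

theorem exists_uncountable_subset_isPrime_vanishingIdeal {k ι : Type*} [Field k] [Finite ι]
    {S : Set (ι → k)} (hS : ¬ S.Countable) : ∃ T ⊆ S, ¬ T.Countable ∧
      (vanishingIdeal k T).IsPrime ∧
      ∀ f ∉ vanishingIdeal k T, {q ∈ T | eval q f = 0}.Countable := by
  obtain ⟨_, ⟨T, hTS, hT, rfl⟩, hmax⟩ := set_has_maximal_iff_noetherian.2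
    (inferInstance : IsNoetherian (MvPolynomial ι k) (MvPolynomial ι k))
    {I | ∃ T ⊆ S, ¬ T.Countable ∧ vanishingIdeal k T = I} ⟨_, S, subset_rfl, hS, rfl⟩
  have hgen (f : MvPolynomial ι k) (hf : f ∉ vanishingIdeal k T) :
      {q ∈ T | eval q f = 0}.Countable := by
    by_contra hc
    refine hmax _ ⟨_, fun q hq => hTS hq.1, hc, rfl⟩ (lt_of_le_not_ge ?_ fun hle => hf (hle ?_))
    · exact vanishingIdeal_anti_mono fun q hq => hq.1
    · exact mem_vanishingIdeal_iff.2 fun q hq => hq.2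
  refine ⟨T, hTS, hT, ⟨fun htop => ?_, fun {f g} hfg => ?_⟩, hgen⟩
  · obtain ⟨q, hq⟩ := Set.nonempty_iff_ne_empty.2 fun h : T = ∅ => hT (h ▸ Set.countable_empty)
    have h1 := mem_vanishingIdeal_iff.1 ((Ideal.eq_top_iff_one _).1 htop) q hq
    exact one_ne_zero ((map_one _).symm.trans h1)
  · by_contra! hfg'
    refine hT (((hgen f hfg'.1).union (hgen g hfg'.2)).mono fun q hq => ?_)
    have h0 : eval q f * eval q g = 0 := by
      rw [← map_mul]
      exact mem_vanishingIdeal_iff.1 hfg q hq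
    exact (mul_eq_zero.1 h0).imp (fun h => ⟨hq, h⟩) fun h => ⟨hq, h⟩

theorem hasFDerivAt_exp_sub_eval [Finite κ] {l : ι → MvPolynomial ι ℝ}
    (G : κ → MvPolynomial ι ℝ) {q : ι → ℝ} (hq : ∀ i, exp (q i) = eval q (l i)) :
    HasFDerivAt (fun x => Sum.elim (fun i => exp (x i) - eval x (l i)) fun r => eval x (G r))
      (toLin' ((expJacobian l G).map (eval q))).toContinuousLinearMap q := by
  have := Fintype.ofFinite κ
  rw [hasFDerivAt_pi']
  rintro (i | r)
  · refine ((hasFDerivAt_apply (𝕜 := ℝ) i q).exp.sub (hasFDerivAt_eval (l i) q)).congr_fderiv ?_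
    ext1 w
    simp [expJacobian_map_mulVec, hq, _root_.sum_apply]
  · refine (hasFDerivAt_eval (G r) q).congr_fderiv ?_
    ext1 w
    simp [expJacobian_map_mulVec, _root_.sum_apply]

theorem map_mulVec_injective_of_mul_eq_smul_one {A B : Type*} [CommRing A] [CommRing B]
    [IsDomain B] [Fintype κ] {M : Matrix κ ι A} {N : Matrix ι κ A} {δ : A} (hNM : N * M = δ • 1)
    (φ : A →+* B) (hφ : φ δ ≠ 0) : Function.Injective (toLin' (M.map φ)) := by
  refine (injective_iff_map_eq_zero _).2 fun w hw => ?_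
  have hmap : N.map φ * M.map φ = φ δ • 1 := by
    rw [← Matrix.map_mul, hNM]
    ext i j
    simp [Matrix.one_apply, apply_ite φ]
  have hw' : M.map φ *ᵥ w = 0 := hw
  have hδw : φ δ • w = 0 := by
    rw [← one_mulVec w, ← smul_mulVec, ← hmap, ← mulVec_mulVec, hw', mulVec_zero]
  exact (smul_eq_zero.1 hδw).resolve_left hφ

omit [Fintype ι] [DecidableEq ι] in
theorem countable_setOf_exp_eq_eval [Finite ι] (l : ι → MvPolynomial ι ℝ) :
    {q : ι → ℝ | ∀ i, exp (q i) = eval q (l i)}.Countable := by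
  classical
  have := Fintype.ofFinite ι
  by_contra hS
  obtain ⟨T, hTS, hT, hprime, hgen⟩ := exists_uncountable_subset_isPrime_vanishingIdeal hS
  have hl (i : ι) : l i ∉ vanishingIdeal ℝ T := by
    obtain ⟨q, hq⟩ := Set.nonempty_iff_ne_empty.2 fun h : T = ∅ => hT (h ▸ Set.countable_empty)
    exact fun hi => (exp_pos (q i)).ne' ((hTS hq i).trans (mem_vanishingIdeal_iff.1 hi q hq))
  obtain ⟨s, hs⟩ := (isNoetherianRing_iff_ideal_fg _).1
    (inferInstance : IsNoetherianRing (MvPolynomial ι ℝ)) (vanishingIdeal ℝ T)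
  let G : s → MvPolynomial ι ℝ := Subtype.val
  have hG : Ideal.span (Set.range G) = vanishingIdeal ℝ T := by rw [Subtype.range_val]; exact hs
  obtain ⟨δ, N, hδ, hN⟩ := exists_mul_eq_smul_one_of_mulVec_injective
    (M := (expJacobian l G).map (Ideal.Quotient.mk (vanishingIdeal ℝ T)))
    fun w => eq_zero_of_expJacobian_map_mulVec_eq_zero hl hG
  obtain ⟨f, rfl⟩ := Ideal.Quotient.mk_surjective δ
  have hf : f ∉ vanishingIdeal ℝ T := mt Ideal.Quotient.eq_zero_iff_mem.2 hδ
  have hinj (q : ι → ℝ) (hq : q ∈ T) (hfq : eval q f ≠ 0) :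
      Function.Injective (toLin' ((expJacobian l G).map (eval q))) :=
    map_mulVec_injective_of_mul_eq_smul_one hN
      (Ideal.Quotient.lift _ (eval q) fun p hp => mem_vanishingIdeal_iff.1 hp q hq) hfq
  have hcount : {q ∈ T | eval q f ≠ 0}.Countable := countable_of_injective_hasFDerivAt
    (fun q hq => hasFDerivAt_exp_sub_eval G (hTS hq.1))
    (fun q hq => hinj q hq.1 hq.2) (c := 0) fun q hq => by
      ext (i | r)
      · exact sub_eq_zero.2 (hTS hq.1 i)
      · exact mem_vanishingIdeal_iff.1 (hG ▸ Ideal.subset_span ⟨r, rfl⟩) q hq.1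
  refine hT (((hgen f hf).union hcount).mono fun q hq => ?_)
  exact (eq_or_ne (eval q f) 0).imp (fun h => ⟨hq, h⟩) fun h => ⟨hq, h⟩

end ExpPolynomial

section Convergence

open Filter Topology Set

theorem exists_mapClusterPt_apply_eq {X : Type*} [TopologicalSpace X] {u : ℝ → X} {K : Set X}
    (hK : IsCompact K) (huK : ∀ᶠ t in atTop, u t ∈ K) {φ : X → ℝ} (hφ : Continuous φ) {c : ℝ}
    (hc : ∃ᶠ t in atTop, φ (u t) = c) : ∃ p, MapClusterPt p atTop u ∧ φ p = c := by
  let F : Filter ℝ := atTop ⊓ 𝓟 {t | φ (u t) = c}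
  have : F.NeBot := frequently_mem_iff_neBot.1 hc
  obtain ⟨p, -, hp⟩ := hK (f := map u F) (le_principal_iff.2 (mem_inf_of_left huK))
  refine ⟨p, hp.mono (map_mono inf_le_left), ?_⟩
  refine isClosed_iff_clusterPt.1 (isClosed_eq hφ continuous_const) p (hp.mono ?_)
  exact le_principal_iff.2 (mem_inf_of_right (mem_principal_self _))

theorem frequently_eq_of_frequently_lt {f : ℝ → ℝ} {t₀ a b c : ℝ} (hf : ContinuousOn f (Ici t₀))
    (ha : ∃ᶠ t in atTop, f t < a) (hb : ∃ᶠ t in atTop, b < f t) (hc : c ∈ Ioo a b) :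
    ∃ᶠ t in atTop, f t = c := by
  refine frequently_atTop.2 fun T => ?_
  obtain ⟨t, ht, hta⟩ := frequently_atTop.1 ha (max T t₀)
  obtain ⟨s, hts, hsb⟩ := frequently_atTop.1 hb t
  have hcont : ContinuousOn f (Icc t s) :=
    hf.mono fun r hr => (le_max_right _ _).trans (ht.trans hr.1)
  obtain ⟨r, hr, hrc⟩ := intermediate_value_Icc hts hcont ⟨(hta.trans hc.1).le, (hc.2.trans hsb).le⟩
  exact ⟨r, (le_max_left _ _).trans (ht.trans hr.1), hrc⟩

/-- An oscillating observable would take each value of an interval at some cluster point. -/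
theorem exists_tendsto_of_countable_mapClusterPt {X : Type*} [TopologicalSpace X] {u : ℝ → X}
    {K : Set X} {t₀ : ℝ} (hu : ContinuousOn u (Ici t₀)) (hK : IsCompact K)
    (huK : ∀ᶠ t in atTop, u t ∈ K) (hS : {p | MapClusterPt p atTop u}.Countable) {φ : X → ℝ}
    (hφ : Continuous φ) : ∃ c, Tendsto (fun t => φ (u t)) atTop (𝓝 c) := by
  obtain ⟨B, hB⟩ := (hK.image hφ).bddAbove
  obtain ⟨A, hA⟩ := (hK.image hφ).bddBelow
  refine tendsto_of_no_upcrossings (s := univ) dense_univ ?_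
    ⟨B, eventually_map.2 (huK.mono fun t ht => hB ⟨_, ht, rfl⟩)⟩
    ⟨A, eventually_map.2 (huK.mono fun t ht => hA ⟨_, ht, rfl⟩)⟩
  intro a _ b _ hab ⟨ha, hb⟩
  have hsub : Ioo a b ⊆ φ '' {p | MapClusterPt p atTop u} := fun c hc =>
    exists_mapClusterPt_apply_eq hK huK hφ
      (frequently_eq_of_frequently_lt (hφ.comp_continuousOn hu) ha hb hc)
  exact (Cardinal.Real.Ioo_countable_iff.1 ((hS.image φ).mono hsub)).not_gt hab

theorem exists_tendsto_nhds_of_countable_mapClusterPt {X : Type*} [PseudoMetricSpace X]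
    {u : ℝ → X} {K : Set X} {t₀ : ℝ} (hu : ContinuousOn u (Ici t₀)) (hK : IsCompact K)
    (huK : ∀ᶠ t in atTop, u t ∈ K) (hS : {p | MapClusterPt p atTop u}.Countable) :
    ∃ p, Tendsto u atTop (𝓝 p) := by
  obtain ⟨p, -, hp⟩ := hK.exists_mapClusterPt (le_principal_iff.2 huK)
  obtain ⟨c, hc⟩ := exists_tendsto_of_countable_mapClusterPt hu hK huK hS
    (φ := fun x => dist x p) (by fun_prop)
  have hc0 : MapClusterPt 0 atTop fun t => dist (u t) p := by
    have hdist : ContinuousAt (fun x => dist x p) p := by fun_prop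
    exact dist_self p ▸ hp.continuousAt_comp hdist
  have hzero : 0 = c := eq_of_nhds_neBot (hc0.clusterPt.mono hc)
  exact ⟨p, tendsto_iff_dist_tendsto_zero.2 (hzero ▸ hc)⟩

theorem tendsto_add_sub_of_antitoneOn {J : ℝ → ℝ} {t₀ : ℝ} (hJ : AntitoneOn J (Ici t₀))
    (hbdd : BddBelow (J '' Ici t₀)) (δ : ℝ) :
    Tendsto (fun t => J (t + δ) - J t) atTop (𝓝 0) := by
  have hmax (t : ℝ) : max t t₀ ∈ Ici t₀ := mem_Ici.2 (le_max_right _ _)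
  have hanti : Antitone fun t => J (max t t₀) := fun s t hst =>
    hJ (hmax s) (hmax t) (max_le_max_right _ hst)
  have hlim := tendsto_atTop_ciInf hanti
    (hbdd.mono (range_subset_iff.2 fun t => mem_image_of_mem J (hmax t)))
  have hJlim : Tendsto J atTop (𝓝 (⨅ t, J (max t t₀))) := hlim.congr' <|
    (eventually_ge_atTop t₀).mono fun t ht => by rw [max_eq_left ht]
  simpa only [sub_self, Function.comp_def, id] using
    (hJlim.comp (tendsto_atTop_add_const_right _ δ tendsto_id)).sub hJlim

theorem antitoneOn_of_hasDerivAt_nonpos {J J' : ℝ → ℝ} {D : Set ℝ} (hD : Convex ℝ D)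
    (hJ : ∀ t ∈ D, HasDerivAt J (J' t) t) (hJ' : ∀ t ∈ D, J' t ≤ 0) : AntitoneOn J D :=
  antitoneOn_of_deriv_nonpos hD (fun t ht => (hJ t ht).continuousAt.continuousWithinAt)
    (fun t ht => (hJ t (interior_subset ht)).differentiableAt.differentiableWithinAt)
    fun t ht => (hJ t (interior_subset ht)).deriv ▸ hJ' t (interior_subset ht)

/-- A Lipschitz path spends a definite time near a cluster point on each visit. -/
theorem nonpos_of_mapClusterPt {X : Type*} [PseudoMetricSpace X] {u : ℝ → X} {J : ℝ → ℝ} {g : X → ℝ}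
    {t₀ : ℝ} {C : NNReal} (hu : LipschitzOnWith C u (Ici t₀))
    (hJ : ∀ t ∈ Ici t₀, HasDerivAt J (-g (u t)) t) (hg : ∀ t ∈ Ici t₀, 0 ≤ g (u t))
    (hbdd : BddBelow (J '' Ici t₀)) {p : X} (hp : MapClusterPt p atTop u) (hgp : ContinuousAt g p) :
    g p ≤ 0 := by
  by_contra! hpos
  obtain ⟨r, hr, hball⟩ :=
    Metric.eventually_nhds_iff.1 (hgp.eventually (lt_mem_nhds (half_lt_self hpos)))
  let δ := r / (2 * (C + 1))
  have hδ : 0 < δ := by positivity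
  have hCδ : C * δ < r / 2 := by
    have : (C + 1) * δ = r / 2 := by simp only [δ]; field_simp
    linarith
  have hanti := antitoneOn_of_hasDerivAt_nonpos (convex_Ici t₀) hJ fun t ht =>
    neg_nonpos.2 (hg t ht)
  have hsmall := (tendsto_add_sub_of_antitoneOn hanti hbdd δ).eventually_const_lt
    (neg_lt_zero.2 (mul_pos (half_pos hpos) hδ))
  have hvisit := hp.frequently (Metric.ball_mem_nhds p (half_pos hr))
  obtain ⟨t, htp, ht0, htJ⟩ :=
    (hvisit.and_eventually ((eventually_ge_atTop t₀).and hsmall)).exists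
  have hIcc (s : ℝ) (hs : s ∈ Icc t (t + δ)) : s ∈ Ici t₀ := ht0.trans hs.1
  obtain ⟨ξ, hξ, hslope⟩ := exists_hasDerivAt_eq_slope J (fun s => -g (u s))
    (lt_add_of_pos_right t hδ)
    (fun s hs => (hJ s (hIcc s hs)).continuousAt.continuousWithinAt)
    fun s hs => hJ s (hIcc s (Ioo_subset_Icc_self hs))
  rw [add_sub_cancel_left, eq_div_iff hδ.ne'] at hslope
  have hnear : dist (u ξ) p < r := by
    calc dist (u ξ) p ≤ dist (u ξ) (u t) + dist (u t) p := dist_triangle _ _ _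
      _ ≤ C * dist ξ t + dist (u t) p := by
        gcongr
        exact hu.dist_le_mul ξ (hIcc ξ (Ioo_subset_Icc_self hξ)) t ht0
      _ ≤ C * δ + dist (u t) p := by
        gcongr
        rw [Real.dist_eq, abs_of_pos (sub_pos.2 hξ.1)]
        linarith [hξ.2]
      _ < r / 2 + r / 2 := add_lt_add hCδ htp
      _ = r := add_halves r
  nlinarith [hball hnear]

end Convergence

theorem exists_mvPolynomial_eval_eq {R ι : Type*} [CommSemiring R] [Finite ι]
    (f : (ι → R) →ₗ[R] R) : ∃ p : MvPolynomial ι R, ∀ x, MvPolynomial.eval x p = f x := by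
  classical
  have := Fintype.ofFinite ι
  refine ⟨∑ i, MvPolynomial.C (f (Pi.single i 1)) * MvPolynomial.X i, fun x => ?_⟩
  simp only [map_sum, map_mul, MvPolynomial.eval_C, MvPolynomial.eval_X]
  conv_rhs => rw [pi_eq_sum_univ' x, map_sum]
  exact sum_congr rfl fun i _ => by rw [map_smul, smul_eq_mul, mul_comm]

/-- Where `b i = 0` the equation is linear, so `L q i` replaces `q i` as a coordinate and the
equation prescribes its exponential; in the new coordinates every equation reads `exp = affine`. -/
theorem countable_setOf_linear_add_eq_mul_exp {ι : Type*} [Finite ι] (L : (ι → ℝ) →ₗ[ℝ] ι → ℝ)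
    (a b : ι → ℝ) (hL : ∀ q, (∀ i, b i = 0 → L q i = 0) → (∀ i, b i ≠ 0 → q i = 0) → q = 0) :
    {q : ι → ℝ | ∀ i, L q i + a i = b i * exp (q i)}.Countable := by
  classical
  have := Fintype.ofFinite ι
  let Φ : (ι → ℝ) →ₗ[ℝ] ι → ℝ := LinearMap.pi fun i =>
    if b i = 0 then LinearMap.proj i ∘ₗ L else LinearMap.proj i
  have hΦ₀ (q : ι → ℝ) (i : ι) (hi : b i = 0) : Φ q i = L q i := by simp [Φ, hi]
  have hΦ₁ (q : ι → ℝ) (i : ι) (hi : b i ≠ 0) : Φ q i = q i := by simp [Φ, hi]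
  have hinj : Function.Injective Φ := (injective_iff_map_eq_zero Φ).2 fun q hq =>
    hL q (fun i hi => hΦ₀ q i hi ▸ congrFun hq i) fun i hi => hΦ₁ q i hi ▸ congrFun hq i
  let e := LinearEquiv.ofInjectiveEndo Φ hinj
  choose p hp using fun i =>
    exists_mvPolynomial_eval_eq (LinearMap.proj i ∘ₗ L ∘ₗ e.symm.toLinearMap)
  have hpΦ (q : ι → ℝ) (i : ι) : MvPolynomial.eval (Φ q) (p i) = L q i := by
    rw [hp]
    exact congrArg (fun q => L q i) (e.symm_apply_apply q)
  let l : ι → MvPolynomial ι ℝ := fun i => if b i = 0 then MvPolynomial.C (exp (-a i)) else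
    MvPolynomial.C (b i)⁻¹ * (p i + MvPolynomial.C (a i))
  refine Set.MapsTo.countable_of_injOn (t := {q | ∀ i, exp (q i) = MvPolynomial.eval q (l i)})
    (f := Φ) (fun q hq i => ?_) hinj.injOn (countable_setOf_exp_eq_eval l)
  have hqi : L q i + a i = b i * exp (q i) := hq i
  by_cases hi : b i = 0
  · rw [hi, zero_mul, add_eq_zero_iff_eq_neg] at hqi
    simp only [l, if_pos hi, MvPolynomial.eval_C, hΦ₀ q i hi, hqi]
  · simp only [l, if_neg hi, map_mul, map_add, MvPolynomial.eval_C, hpΦ, hΦ₁ q i hi, hqi]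
    rw [inv_mul_cancel_left₀ hi]

theorem exists_pos_forall_ne_le {ι : Type*} [Finite ι] {W : ι → ι → ℝ}
    (hW : ∀ x y, x ≠ y → 0 < W x y) : ∃ w, 0 < w ∧ ∀ x y, x ≠ y → w ≤ W x y := by
  obtain ⟨w, hw, hle⟩ := Pi.exists_forall_pos_add_lt (x := 0)
    (y := fun p : {p : ι × ι // p.1 ≠ p.2} => W p.1.1 p.1.2) fun p => hW _ _ p.2
  exact ⟨w, hw, fun x y hxy => by simpa using (hle ⟨(x, y), hxy⟩).le⟩

theorem le_of_mul_sq_sub_add_le {w r b s t J : ℝ} (hw : 0 < w) (hr : 0 ≤ r + 1) (hbt : b ≤ t)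
    (hJ : w / 4 * (t - s) ^ 2 + r * s ≤ J) : (r + 1) * b - J - (r + 1) ^ 2 / w ≤ s := by
  -- AM-GM: `(r + 1) (t - s) ≤ w (t - s) ^ 2 / 4 + (r + 1) ^ 2 / w`
  have hsq : w / 4 * (t - s) ^ 2 - (r + 1) * (t - s) + (r + 1) ^ 2 / w =
      (w * (t - s) / 2 - (r + 1)) ^ 2 / w := by
    field_simp
    ring
  have hnonneg : 0 ≤ (w * (t - s) / 2 - (r + 1)) ^ 2 / w := div_nonneg (sq_nonneg _) hw.le
  linarith [mul_le_mul_of_nonneg_left hbt hr]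

section Integral

variable [Fintype V] {μ : V → ℝ}

/-- The integral `∫_V h e^p dμ`; for `h = 1` it is the mass `∫_V e^p dμ`, which the mean field
flow conserves. -/
noncomputable def expInt (μ h p : V → ℝ) : ℝ := intV μ fun y => h y * exp (p y)

theorem continuous_intV (μ : V → ℝ) : Continuous (intV μ) := by
  unfold intV
  fun_prop

theorem continuous_expInt (μ h : V → ℝ) : Continuous (expInt μ h) :=
  (continuous_intV μ).comp (by fun_prop)

theorem hasDerivAt_intV {f : ℝ → V → ℝ} {f' : V → ℝ} {t : ℝ} (hf : HasDerivAt f f' t)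
    (μ : V → ℝ) : HasDerivAt (fun s => intV μ (f s)) (intV μ f') t :=
  .fun_sum fun x _ => (hasDerivAt_pi.1 hf x).const_mul (μ x)

theorem hasDerivAt_expInt {p : ℝ → V → ℝ} {f : V → ℝ} {t : ℝ}
    (hp : ∀ x, HasDerivAt (fun s => exp (p s x)) (f x) t) (μ h : V → ℝ) :
    HasDerivAt (fun s => expInt μ h (p s)) (intV μ fun x => h x * f x) t :=
  hasDerivAt_intV (hasDerivAt_pi.2 fun x => (hp x).const_mul (h x)) μ

theorem volV_pos [Nonempty V] (hμ : ∀ x, 0 < μ x) : 0 < volV μ :=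
  sum_pos (fun x _ => hμ x) univ_nonempty

theorem expInt_one_pos [Nonempty V] (hμ : ∀ x, 0 < μ x) (p : V → ℝ) : 0 < expInt μ 1 p :=
  sum_pos (fun x _ => mul_pos (hμ x) (mul_pos one_pos (exp_pos _))) univ_nonempty

theorem expInt_eq_mul_expInt_sub_log (μ h : V → ℝ) {c : ℝ} (hc : 0 < c) (p : V → ℝ) :
    expInt μ h p = c * expInt μ h (fun x => p x - log c) := by
  rw [expInt, expInt, intV, intV, mul_sum]
  refine sum_congr rfl fun x _ => ?_
  rw [exp_sub, exp_log hc]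
  field_simp

theorem le_log_expInt_one_div (hμ : ∀ x, 0 < μ x) (p : V → ℝ) (x : V) :
    p x ≤ log (expInt μ 1 p / μ x) := by
  have hle : μ x * (1 * exp (p x)) ≤ expInt μ 1 p :=
    single_le_sum (f := fun x => μ x * (1 * exp (p x)))
      (fun y _ => mul_nonneg (hμ y).le (mul_nonneg zero_le_one (exp_pos _).le)) (mem_univ x)
  have hexp : exp (p x) ≤ expInt μ 1 p / μ x := by
    rwa [le_div_iff₀ (hμ x), mul_comm, ← one_mul (exp _)]
  exact (le_log_iff_exp_le ((exp_pos _).trans_le hexp)).2 hexp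

theorem exists_log_expInt_one_div_le [Nonempty V] (hμ : ∀ x, 0 < μ x) (p : V → ℝ) :
    ∃ x, log (expInt μ 1 p / volV μ) ≤ p x := by
  by_contra! hlt
  have hpos : 0 < expInt μ 1 p / volV μ := div_pos (expInt_one_pos hμ p) (volV_pos hμ)
  have hsum : expInt μ 1 p < ∑ x, μ x * (expInt μ 1 p / volV μ) :=
    sum_lt_sum_of_nonempty univ_nonempty fun x _ => mul_lt_mul_of_pos_left
      (by simpa using (lt_log_iff_exp_lt hpos).1 (hlt x)) (hμ x)
  rw [← sum_mul, ← volV, mul_div_cancel₀ _ (volV_pos hμ).ne'] at hsum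
  exact hsum.false

theorem abs_expInt_le_norm_mul (hμ : ∀ x, 0 < μ x) (h p : V → ℝ) :
    |expInt μ h p| ≤ ‖h‖ * expInt μ 1 p :=
  calc |expInt μ h p| ≤ ∑ x, |μ x * (h x * exp (p x))| := abs_sum_le_sum_abs _ _
    _ ≤ ∑ x, ‖h‖ * (μ x * (1 * exp (p x))) := sum_le_sum fun x _ => by
      rw [abs_mul, abs_mul, abs_of_pos (hμ x), abs_of_pos (exp_pos _), one_mul, mul_left_comm]
      exact mul_le_mul_of_nonneg_right (norm_le_pi_norm h x)
        (mul_nonneg (hμ x).le (exp_pos _).le)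
    _ = ‖h‖ * expInt μ 1 p := (mul_sum ..).symm

theorem mul_volV_le_intV (hμ : ∀ x, 0 < μ x) {p : V → ℝ} {s : ℝ} (hs : ∀ x, s ≤ p x) :
    s * volV μ ≤ intV μ p := by
  rw [volV, intV, mul_sum]
  exact sum_le_sum fun x _ => by
    rw [mul_comm]
    exact mul_le_mul_of_nonneg_left (hs x) (hμ x).le

end Integral

section NonlocalLaplacian

variable [Fintype V] [DecidableEq V] {μ : V → ℝ} {W : V → V → ℝ}

theorem opL_eq_sum (μ : V → ℝ) (W : V → V → ℝ) (u : V → ℝ) (x : V) :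
    opL μ W u x = 1 / μ x * ∑ y, W x y * (u x - u y) := by
  rw [opL, sum_filter_of_ne (p := (· ≠ x)) fun y _ hy hyx =>
    hy (by rw [hyx, sub_self, mul_zero])]

theorem isLinearMap_opL (μ : V → ℝ) (W : V → V → ℝ) : IsLinearMap ℝ (opL μ W) where
  map_add u v := by
    ext x
    simp only [opL_eq_sum, Pi.add_apply, ← mul_add, ← sum_add_distrib]
    exact congrArg _ (sum_congr rfl fun y _ => by ring)
  map_smul c u := by
    ext x
    simp only [opL_eq_sum, Pi.smul_apply, smul_eq_mul, mul_sum]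
    exact sum_congr rfl fun y _ => by ring

theorem continuous_opL (μ : V → ℝ) (W : V → V → ℝ) : Continuous (opL μ W) := by
  unfold opL
  fun_prop

theorem continuous_gradSq (μ : V → ℝ) (W : V → V → ℝ) : Continuous (gradSq μ W) := by
  unfold gradSq gradForm
  fun_prop

theorem intV_gradForm (hμ : ∀ x, 0 < μ x) (W : V → V → ℝ) (u v : V → ℝ) :
    intV μ (gradForm μ W u v) = 1 / 2 * ∑ x, ∑ y, W x y * (u x - u y) * (v x - v y) := by
  rw [intV, mul_sum]
  refine sum_congr rfl fun x _ => ?_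
  rw [gradForm,
    sum_filter_of_ne (p := (· ≠ x)) fun y _ hy hyx =>
      hy (by rw [hyx, sub_self, mul_zero, zero_mul])]
  have := (hμ x).ne'
  field_simp

theorem intV_mul_opL (hμ : ∀ x, 0 < μ x) (hW : ∀ x y, W x y = W y x) (u v : V → ℝ) :
    intV μ (fun x => v x * opL μ W u x) = intV μ (gradForm μ W u v) := by
  have hswap : ∑ x, ∑ y, W x y * (u x - u y) * v y = -∑ x, ∑ y, W x y * (u x - u y) * v x := by
    rw [sum_comm, ← sum_neg_distrib]
    refine sum_congr rfl fun x _ => ?_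
    rw [← sum_neg_distrib]
    exact sum_congr rfl fun y _ => by rw [hW]; ring
  have hleft : intV μ (fun x => v x * opL μ W u x) = ∑ x, ∑ y, W x y * (u x - u y) * v x := by
    refine sum_congr rfl fun x _ => ?_
    simp only [opL_eq_sum, ← sum_mul]
    have := (hμ x).ne'
    field_simp
  rw [intV_gradForm hμ, hleft]
  simp only [mul_sub _ (v _), sum_sub_distrib, hswap]
  ring

theorem intV_opL (hμ : ∀ x, 0 < μ x) (hW : ∀ x y, W x y = W y x) (u : V → ℝ) :
    intV μ (opL μ W u) = 0 := by
  simpa [intV_gradForm hμ] using intV_mul_opL hμ hW u fun _ => 1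

theorem mul_sq_sub_le_intV_gradSq (hμ : ∀ x, 0 < μ x) (hW : ∀ x y, x ≠ y → 0 < W x y)
    (u : V → ℝ) (x y : V) : W x y * (u x - u y) ^ 2 ≤ 2 * intV μ (gradSq μ W u) := by
  have hnonneg (x y : V) : 0 ≤ W x y * (u x - u y) * (u x - u y) := by
    rcases eq_or_ne x y with rfl | hxy
    · simp
    · rw [mul_assoc]
      exact mul_nonneg (hW x y hxy).le (mul_self_nonneg _)
  have hgrad : 2 * intV μ (gradSq μ W u) = ∑ x, ∑ y, W x y * (u x - u y) * (u x - u y) := by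
    rw [show gradSq μ W u = gradForm μ W u u from rfl, intV_gradForm hμ]
    ring
  calc W x y * (u x - u y) ^ 2 = W x y * (u x - u y) * (u x - u y) := by ring
    _ ≤ ∑ y, W x y * (u x - u y) * (u x - u y) :=
      single_le_sum (f := fun y => W x y * (u x - u y) * (u x - u y))
        (fun y _ => hnonneg x y) (mem_univ y)
    _ ≤ ∑ x, ∑ y, W x y * (u x - u y) * (u x - u y) :=
      single_le_sum (f := fun x => ∑ y, W x y * (u x - u y) * (u x - u y))
        (fun x _ => sum_nonneg fun y _ => hnonneg x y) (mem_univ x)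
    _ = 2 * intV μ (gradSq μ W u) := hgrad.symm

theorem intV_gradSq_nonneg [Nonempty V] (hμ : ∀ x, 0 < μ x) (hW : ∀ x y, x ≠ y → 0 < W x y)
    (u : V → ℝ) : 0 ≤ intV μ (gradSq μ W u) := by
  simpa using mul_sq_sub_le_intV_gradSq hμ hW u (Classical.arbitrary V) (Classical.arbitrary V)

theorem eq_of_intV_gradSq_eq_zero (hμ : ∀ x, 0 < μ x) (hW : ∀ x y, x ≠ y → 0 < W x y) {u : V → ℝ}
    (hu : intV μ (gradSq μ W u) = 0) (x y : V) : u x = u y := by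
  rcases eq_or_ne x y with rfl | hxy
  · rfl
  · have hle := mul_sq_sub_le_intV_gradSq hμ hW u x y
    rw [hu, mul_zero] at hle
    exact sub_eq_zero.1 (pow_eq_zero_iff two_ne_zero |>.1
      (le_antisymm (nonpos_of_mul_nonpos_right hle (hW x y hxy)) (sq_nonneg _)))

theorem opL_sub_const (μ : V → ℝ) (W : V → V → ℝ) (p : V → ℝ) (c : ℝ) :
    opL μ W (fun x => p x - c) = opL μ W p := by
  ext x
  simp only [opL_eq_sum, sub_sub_sub_cancel_right]

theorem countable_setOf_opL_add_eq_mul_exp (hμ : ∀ x, 0 < μ x) (hWsymm : ∀ x y, W x y = W y x)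
    (hW : ∀ x y, x ≠ y → 0 < W x y) (a : V → ℝ) {b : V → ℝ} (hb : b ≠ 0) :
    {q : V → ℝ | ∀ x, opL μ W q x + a x = b x * exp (q x)}.Countable := by
  refine countable_setOf_linear_add_eq_mul_exp (isLinearMap_opL μ W).mk' a b fun q hq₀ hq₁ => ?_
  have hmul (x : V) : q x * opL μ W q x = 0 := by
    by_cases hx : b x = 0
    · rw [show opL μ W q x = 0 from hq₀ x hx, mul_zero]
    · rw [hq₁ x hx, zero_mul]
  have hgrad : intV μ (gradSq μ W q) = 0 := by
    rw [show gradSq μ W q = gradForm μ W q q from rfl, ← intV_mul_opL hμ hWsymm]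
    simp only [hmul, intV, mul_zero, sum_const_zero]
  obtain ⟨z, hz⟩ := Function.ne_iff.1 hb
  ext x
  rw [eq_of_intV_gradSq_eq_zero hμ hW hgrad x z, hq₁ z hz, Pi.zero_apply]

end NonlocalLaplacian

section MeanFieldEquation

variable [Fintype V] [DecidableEq V] {μ : V → ℝ} {W : V → V → ℝ} {ρ : ℝ} {h : V → ℝ}

noncomputable section

/-- The right-hand side of the mean field flow; it vanishes exactly at the solutions of the mean
field equation. -/
def meanFieldResidual (μ : V → ℝ) (W : V → V → ℝ) (ρ : ℝ) (h p : V → ℝ) (x : V) : ℝ :=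
  -(opL μ W p x) + ρ * (h x * exp (p x) / expInt μ h p - 1 / volV μ)

/-- The energy functional whose gradient flow is the mean field flow. Since `Real.log` is
`log |·|`, it is meaningful for both signs of `∫_V h e^p dμ`. -/
def meanFieldEnergy (μ : V → ℝ) (W : V → V → ℝ) (ρ : ℝ) (h p : V → ℝ) : ℝ :=
  1 / 2 * intV μ (gradSq μ W p) - ρ * log (expInt μ h p) + ρ / volV μ * intV μ p

/-- The velocity `∂_t u` of the mean field flow at `u = p`. -/
def meanFieldVelocity (μ : V → ℝ) (W : V → V → ℝ) (ρ : ℝ) (h p : V → ℝ) (x : V) : ℝ :=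
  meanFieldResidual μ W ρ h p x / exp (p x)

/-- The rate at which the mean field flow decreases `meanFieldEnergy`. -/
def meanFieldDissipation (μ : V → ℝ) (W : V → V → ℝ) (ρ : ℝ) (h p : V → ℝ) : ℝ :=
  intV μ fun x => meanFieldVelocity μ W ρ h p x * meanFieldResidual μ W ρ h p x

/-- The admissible functions of mass `m` and energy at most `E`. -/
def meanFieldSublevel (μ : V → ℝ) (W : V → V → ℝ) (ρ : ℝ) (h : V → ℝ) (m E : ℝ) : Set (V → ℝ) :=
  {p | expInt μ h p ≠ 0 ∧ expInt μ 1 p = m ∧ meanFieldEnergy μ W ρ h p ≤ E}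

end

theorem meanFieldResidual_eq_zero_iff {p : V → ℝ} {x : V} :
    meanFieldResidual μ W ρ h p x = 0 ↔
      opL μ W p x = ρ * (h x * exp (p x) / expInt μ h p - 1 / volV μ) := by
  rw [meanFieldResidual, neg_add_eq_zero]

/-- Subtracting `log |∫_V h e^p dμ|` from `p` makes the equation local, up to the sign of the
integral; the mass recovers `p` from the result. -/
theorem countable_setOf_meanFieldResidual_eq_zero [Nonempty V] (hμ : ∀ x, 0 < μ x)
    (hWsymm : ∀ x y, W x y = W y x) (hW : ∀ x y, x ≠ y → 0 < W x y) (hρ : ρ ≠ 0) (h : V → ℝ)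
    (m : ℝ) :
    {p : V → ℝ | expInt μ h p ≠ 0 ∧ expInt μ 1 p = m ∧
      meanFieldResidual μ W ρ h p = 0}.Countable := by
  rcases eq_or_ne h 0 with rfl | hh
  · simp [expInt, intV]
  let T (σ : ℝ) : Set (V → ℝ) :=
    {q | ∀ x, opL μ W q x + ρ / volV μ = (ρ * σ * h x) * exp (q x)}
  have hT {σ : ℝ} (hσ : σ ≠ 0) : (T σ).Countable := by
    obtain ⟨x, hx⟩ := Function.ne_iff.1 hh
    exact countable_setOf_opL_add_eq_mul_exp hμ hWsymm hW _
      (Function.ne_iff.2 ⟨x, mul_ne_zero (mul_ne_zero hρ hσ) hx⟩)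
  let f (p : V → ℝ) (x : V) : ℝ := p x - log |expInt μ h p|
  refine Set.MapsTo.countable_of_injOn (f := f) (t := T 1 ∪ T (-1)) ?_ ?_
    ((hT one_ne_zero).union (hT (neg_ne_zero.2 one_ne_zero)))
  · rintro p ⟨hp, -, hres⟩
    have hmem {σ : ℝ} (hσ : |expInt μ h p| = σ * expInt μ h p) : f p ∈ T σ := fun x => by
      have hσ₀ : σ ≠ 0 := left_ne_zero_of_mul (hσ ▸ (abs_pos.2 hp).ne')
      rw [opL_sub_const, meanFieldResidual_eq_zero_iff.1 (congrFun hres x), exp_sub,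
        exp_log (abs_pos.2 hp), hσ]
      field_simp
      ring
    rcases abs_choice (expInt μ h p) with habs | habs
    · exact .inl (hmem (habs.trans (one_mul _).symm))
    · exact .inr (hmem (habs.trans (neg_one_mul _).symm))
  · rintro p ⟨hp, hpm, -⟩ q ⟨hq, hqm, -⟩ hpq
    have habs : |expInt μ h p| = |expInt μ h q| := by
      refine mul_right_cancel₀ (expInt_one_pos hμ (f p)).ne' ?_
      rw [← expInt_eq_mul_expInt_sub_log μ 1 (abs_pos.2 hp), hpq,
        ← expInt_eq_mul_expInt_sub_log μ 1 (abs_pos.2 hq), hpm, hqm]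
    ext x
    simpa only [f, habs, sub_left_inj] using congrFun hpq x

theorem le_meanFieldEnergy [Nonempty V] (hμ : ∀ x, 0 < μ x) (W : V → V → ℝ) (hρ : 0 ≤ ρ)
    (h : V → ℝ) {p : V → ℝ} {s : ℝ} (hs : ∀ x, s ≤ p x) :
    1 / 2 * intV μ (gradSq μ W p) - ρ * log (expInt μ h p) + ρ * s ≤
      meanFieldEnergy μ W ρ h p := by
  have hvol := volV_pos hμ
  refine add_le_add_right ?_ _
  calc ρ * s = ρ / volV μ * (s * volV μ) := by field_simp
    _ ≤ ρ / volV μ * intV μ p :=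
      mul_le_mul_of_nonneg_left (mul_volV_le_intV hμ hs) (div_nonneg hρ hvol.le)

theorem continuousAt_meanFieldResidual (μ : V → ℝ) (W : V → V → ℝ) (ρ : ℝ) {h p : V → ℝ}
    (hp : expInt μ h p ≠ 0) : ContinuousAt (meanFieldResidual μ W ρ h) p := by
  refine continuousAt_pi.2 fun x => ?_
  have hop := ((continuous_apply x).comp (continuous_opL μ W)).continuousAt (x := p)
  have hexp := (continuous_apply x).rexp.continuousAt (x := p)
  exact hop.neg.add (continuousAt_const.mul (((continuousAt_const.mul hexp).div₀
    (continuous_expInt μ h).continuousAt hp).sub continuousAt_const))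

theorem continuousAt_meanFieldEnergy (μ : V → ℝ) (W : V → V → ℝ) (ρ : ℝ) {h p : V → ℝ}
    (hp : expInt μ h p ≠ 0) : ContinuousAt (meanFieldEnergy μ W ρ h) p := by
  have hexpInt := (continuous_expInt μ h).continuousAt (x := p)
  have hgrad := ((continuous_intV μ).comp (continuous_gradSq μ W)).continuousAt (x := p)
  have hint := (continuous_intV μ).continuousAt (x := p)
  exact ((continuousAt_const.mul hgrad).sub (continuousAt_const.mul (hexpInt.log hp))).add
    (continuousAt_const.mul hint)

theorem continuousAt_meanFieldVelocity (μ : V → ℝ) (W : V → V → ℝ) (ρ : ℝ) {h p : V → ℝ}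
    (hp : expInt μ h p ≠ 0) : ContinuousAt (meanFieldVelocity μ W ρ h) p :=
  continuousAt_pi.2 fun x =>
    (continuousAt_pi.1 (continuousAt_meanFieldResidual μ W ρ hp) x).div₀
      (continuous_apply x).rexp.continuousAt (exp_pos _).ne'

theorem continuousAt_meanFieldDissipation (μ : V → ℝ) (W : V → V → ℝ) (ρ : ℝ) {h p : V → ℝ}
    (hp : expInt μ h p ≠ 0) : ContinuousAt (meanFieldDissipation μ W ρ h) p :=
  (continuous_intV μ).continuousAt.comp <| (continuousAt_meanFieldVelocity μ W ρ hp).mul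
    (continuousAt_meanFieldResidual μ W ρ hp)

theorem meanFieldVelocity_mul_residual_nonneg (μ : V → ℝ) (W : V → V → ℝ) (ρ : ℝ) (h p : V → ℝ)
    (x : V) : 0 ≤ meanFieldVelocity μ W ρ h p x * meanFieldResidual μ W ρ h p x := by
  unfold meanFieldVelocity
  rw [div_mul_eq_mul_div]
  exact div_nonneg (mul_self_nonneg _) (exp_pos _).le

theorem meanFieldDissipation_nonneg (hμ : ∀ x, 0 < μ x) (W : V → V → ℝ) (ρ : ℝ) (h p : V → ℝ) :
    0 ≤ meanFieldDissipation μ W ρ h p :=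
  sum_nonneg fun x _ => mul_nonneg (hμ x).le (meanFieldVelocity_mul_residual_nonneg ..)

theorem meanFieldResidual_eq_zero_of_dissipation_nonpos (hμ : ∀ x, 0 < μ x) {p : V → ℝ}
    (hp : meanFieldDissipation μ W ρ h p ≤ 0) : meanFieldResidual μ W ρ h p = 0 := by
  have hzero := (sum_eq_zero_iff_of_nonneg fun x _ =>
    mul_nonneg (hμ x).le (meanFieldVelocity_mul_residual_nonneg μ W ρ h p x)).1
    (hp.antisymm (meanFieldDissipation_nonneg hμ W ρ h p))
  ext x
  simpa [meanFieldVelocity, (hμ x).ne'] using hzero x (mem_univ x)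

theorem intV_meanFieldResidual [Nonempty V] (hμ : ∀ x, 0 < μ x)
    (hWsymm : ∀ x y, W x y = W y x) (ρ : ℝ) {p : V → ℝ} (hp : expInt μ h p ≠ 0) :
    intV μ (meanFieldResidual μ W ρ h p) = 0 := by
  have hvol := (volV_pos hμ).ne'
  calc intV μ (meanFieldResidual μ W ρ h p)
      = -intV μ (opL μ W p) + ρ / expInt μ h p * expInt μ h p - ρ / volV μ * volV μ := by
        rw [expInt, intV, intV, intV, volV, mul_sum, mul_sum, ← sum_neg_distrib,
          ← sum_add_distrib, ← sum_sub_distrib]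
        refine sum_congr rfl fun x _ => ?_
        rw [meanFieldResidual, expInt, intV, volV]
        ring
    _ = 0 := by
        rw [intV_opL hμ hWsymm]
        field_simp
        ring

theorem hasDerivAt_intV_gradSq {u : ℝ → V → ℝ} {v : V → ℝ} {t : ℝ} (hu : HasDerivAt u v t)
    (μ : V → ℝ) (W : V → V → ℝ) :
    HasDerivAt (fun s => intV μ (gradSq μ W (u s))) (2 * intV μ (gradForm μ W (u t) v)) t := by
  have hgrad (x : V) :
      HasDerivAt (fun s => gradSq μ W (u s) x) (2 * gradForm μ W (u t) v x) t := by
    have hsub (y : V) := (hasDerivAt_pi.1 hu x).sub (hasDerivAt_pi.1 hu y)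
    refine ((HasDerivAt.fun_sum fun y _ =>
      ((hsub y).const_mul (W x y)).mul (hsub y)).const_mul (1 / (2 * μ x))).congr_deriv ?_
    rw [gradForm, mul_left_comm, mul_sum (a := (2 : ℝ))]
    refine congrArg _ (sum_congr rfl fun y _ => ?_)
    simp only [Pi.sub_apply]
    ring
  refine (hasDerivAt_intV (hasDerivAt_pi.2 hgrad) μ).congr_deriv ?_
  rw [intV, intV, mul_sum]
  exact sum_congr rfl fun x _ => mul_left_comm ..

theorem hasDerivAt_meanFieldEnergy (hμ : ∀ x, 0 < μ x) (hWsymm : ∀ x y, W x y = W y x) (ρ : ℝ)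
    {u : ℝ → V → ℝ} {v : V → ℝ} {t : ℝ} (hu : HasDerivAt u v t) (hne : expInt μ h (u t) ≠ 0) :
    HasDerivAt (fun s => meanFieldEnergy μ W ρ h (u s))
      (-intV μ fun x => v x * meanFieldResidual μ W ρ h (u t) x) t := by
  have hlog := (hasDerivAt_expInt (fun x => (hasDerivAt_pi.1 hu x).exp) μ h).log hne
  refine ((((hasDerivAt_intV_gradSq hu μ W).const_mul (1 / 2)).sub (hlog.const_mul ρ)).add
    ((hasDerivAt_intV hu μ).const_mul (ρ / volV μ))).congr_deriv ?_
  rw [← intV_mul_opL hμ hWsymm]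
  simp only [intV, mul_sum, sum_div, ← sum_neg_distrib, ← sum_sub_distrib, ← sum_add_distrib]
  refine sum_congr rfl fun x _ => ?_
  rw [meanFieldResidual]
  ring

section Sublevel

variable [Nonempty V] (hμ : ∀ x, 0 < μ x) (hW : ∀ x y, x ≠ y → 0 < W x y) (hρ : 0 < ρ)
  (h : V → ℝ) (m E : ℝ)
include hμ hW hρ

theorem exists_forall_mem_meanFieldSublevel_le :
    ∃ A, ∀ p ∈ meanFieldSublevel μ W ρ h m E, ∀ x, A ≤ p x := by
  obtain ⟨w, hw, hwW⟩ := exists_pos_forall_ne_le hW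
  refine ⟨(ρ + 1) * log (m / volV μ) - (E + ρ * log (‖h‖ * m)) - (ρ + 1) ^ 2 / w,
    fun p hp x => ?_⟩
  obtain ⟨hp₀, rfl, hpE⟩ := hp
  obtain ⟨z, hz⟩ := Finite.exists_min p
  obtain ⟨y, hy⟩ := exists_log_expInt_one_div_le hμ p
  refine (le_of_mul_sq_sub_add_le hw (by positivity) hy ?_).trans (hz x)
  have hgrad : w * (p y - p z) ^ 2 ≤ 2 * intV μ (gradSq μ W p) := by
    refine le_trans ?_ (mul_sq_sub_le_intV_gradSq hμ hW p y z)
    rcases eq_or_ne y z with rfl | hyz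
    · simp
    · exact mul_le_mul_of_nonneg_right (hwW y z hyz) (sq_nonneg _)
  have hlog : log (expInt μ h p) ≤ log (‖h‖ * expInt μ 1 p) := by
    rw [← log_abs]
    exact log_le_log (abs_pos.2 hp₀) (abs_expInt_le_norm_mul hμ h p)
  linarith [le_meanFieldEnergy hμ W hρ.le h hz, mul_le_mul_of_nonneg_left hlog hρ.le]

theorem exists_pos_forall_mem_meanFieldSublevel_le_abs_expInt :
    ∃ c, 0 < c ∧ ∀ p ∈ meanFieldSublevel μ W ρ h m E, c ≤ |expInt μ h p| := by
  obtain ⟨A, hA⟩ := exists_forall_mem_meanFieldSublevel_le hμ hW hρ h m E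
  refine ⟨exp (A - E / ρ), exp_pos _, fun p hp => ?_⟩
  have hgrad : 0 ≤ intV μ (gradSq μ W p) := intV_gradSq_nonneg hμ hW p
  rw [← le_log_iff_exp_le (abs_pos.2 hp.1), log_abs, sub_le_comm, le_div_iff₀ hρ]
  linarith [le_meanFieldEnergy hμ W hρ.le h (hA p hp), hp.2.2]

theorem isCompact_meanFieldSublevel : IsCompact (meanFieldSublevel μ W ρ h m E) := by
  obtain ⟨A, hA⟩ := exists_forall_mem_meanFieldSublevel_le hμ hW hρ h m E
  obtain ⟨c, hc, hcle⟩ :=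
    exists_pos_forall_mem_meanFieldSublevel_le_abs_expInt hμ hW hρ h m E
  let K : Set (V → ℝ) := Set.Icc (fun _ => A) (fun x => log (m / μ x)) ∩
    ({p | c ≤ |expInt μ h p|} ∩ {p | expInt μ 1 p = m})
  have hK : IsCompact K := isCompact_Icc.inter_right <|
    (isClosed_le continuous_const (continuous_expInt μ h).abs).inter
      (isClosed_eq (continuous_expInt μ 1) continuous_const)
  have hne {p : V → ℝ} (hp : p ∈ K) : expInt μ h p ≠ 0 := abs_pos.1 (hc.trans_le hp.2.1)
  have heq : meanFieldSublevel μ W ρ h m E = K ∩ meanFieldEnergy μ W ρ h ⁻¹' Set.Iic E := by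
    ext p
    refine ⟨fun hp => ⟨⟨⟨hA p hp, fun x => ?_⟩, hcle p hp, hp.2.1⟩, hp.2.2⟩,
      fun hp => ⟨hne hp.1, hp.1.2.2, hp.2⟩⟩
    simpa only [hp.2.1] using le_log_expInt_one_div hμ p x
  have hcont : ContinuousOn (meanFieldEnergy μ W ρ h) K := fun p hp =>
    (continuousAt_meanFieldEnergy μ W ρ (hne hp)).continuousWithinAt
  rw [heq]
  exact hK.of_isClosed_subset
    (hcont.preimage_isClosed_of_isClosed hK.isClosed isClosed_Iic) Set.inter_subset_left

end Sublevel

/-- A global solution `u` of the mean field flow, along which `∫_V h e^u dμ` never vanishes. -/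
structure IsMeanFieldFlow (μ : V → ℝ) (W : V → V → ℝ) (ρ : ℝ) (h : V → ℝ) (u : ℝ → V → ℝ) :
    Prop where
  expInt_ne_zero : ∀ t ∈ Set.Ici (0 : ℝ), expInt μ h (u t) ≠ 0
  hasDerivAt_exp : ∀ x, ∀ t ∈ Set.Ici (0 : ℝ),
    HasDerivAt (fun s => exp (u s x)) (meanFieldResidual μ W ρ h (u t) x) t

namespace IsMeanFieldFlow

open Filter Topology

variable {u : ℝ → V → ℝ} {t : ℝ}

theorem hasDerivAt (hu : IsMeanFieldFlow μ W ρ h u) (ht : t ∈ Set.Ici 0) :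
    HasDerivAt u (meanFieldVelocity μ W ρ h (u t)) t :=
  hasDerivAt_pi.2 fun x => by
    simpa only [log_exp, meanFieldVelocity] using
      (hu.hasDerivAt_exp x t ht).log (exp_pos _).ne'

theorem hasDerivAt_energy (hu : IsMeanFieldFlow μ W ρ h u) (hμ : ∀ x, 0 < μ x)
    (hWsymm : ∀ x y, W x y = W y x) (ht : t ∈ Set.Ici 0) :
    HasDerivAt (fun s => meanFieldEnergy μ W ρ h (u s))
      (-meanFieldDissipation μ W ρ h (u t)) t :=
  hasDerivAt_meanFieldEnergy hμ hWsymm ρ (hu.hasDerivAt ht) (hu.expInt_ne_zero t ht)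

variable [Nonempty V]

theorem expInt_one_eq (hu : IsMeanFieldFlow μ W ρ h u) (hμ : ∀ x, 0 < μ x)
    (hWsymm : ∀ x y, W x y = W y x) (ht : t ∈ Set.Ici 0) :
    expInt μ 1 (u t) = expInt μ 1 (u 0) := by
  have hderiv (s : ℝ) (hs : s ∈ Set.Ici 0) : HasDerivAt (fun r => expInt μ 1 (u r)) 0 s :=
    (hasDerivAt_expInt (fun x => hu.hasDerivAt_exp x s hs) μ 1).congr_deriv <| by
      simpa using intV_meanFieldResidual hμ hWsymm ρ (hu.expInt_ne_zero s hs)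
  exact constant_of_has_deriv_right_zero
    (fun s hs => (hderiv s hs.1).continuousAt.continuousWithinAt)
    (fun s hs => (hderiv s hs.1).hasDerivWithinAt) t ⟨ht, le_rfl⟩

theorem mem_sublevel (hu : IsMeanFieldFlow μ W ρ h u) (hμ : ∀ x, 0 < μ x)
    (hWsymm : ∀ x y, W x y = W y x) (ht : t ∈ Set.Ici 0) :
    u t ∈ meanFieldSublevel μ W ρ h (expInt μ 1 (u 0)) (meanFieldEnergy μ W ρ h (u 0)) :=
  ⟨hu.expInt_ne_zero t ht, hu.expInt_one_eq hμ hWsymm ht,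
    antitoneOn_of_hasDerivAt_nonpos (convex_Ici 0)
      (fun _ hs => hu.hasDerivAt_energy hμ hWsymm hs)
      (fun _ _ => neg_nonpos.2 (meanFieldDissipation_nonneg hμ W ρ h _))
      Set.self_mem_Ici ht ht⟩

variable (hu : IsMeanFieldFlow μ W ρ h u) (hμ : ∀ x, 0 < μ x)
  (hWsymm : ∀ x y, W x y = W y x) (hW : ∀ x y, x ≠ y → 0 < W x y) (hρ : 0 < ρ)
include hu hμ hWsymm hW hρ

theorem exists_lipschitzOnWith : ∃ C, LipschitzOnWith C u (Set.Ici 0) := by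
  let K := meanFieldSublevel μ W ρ h (expInt μ 1 (u 0)) (meanFieldEnergy μ W ρ h (u 0))
  have hK : IsCompact K := isCompact_meanFieldSublevel hμ hW hρ h _ _
  have hcont : ContinuousOn (meanFieldVelocity μ W ρ h) K := fun p hp =>
    (continuousAt_meanFieldVelocity μ W ρ hp.1).continuousWithinAt
  obtain ⟨C, hC⟩ := hK.exists_bound_of_continuousOn hcont
  refine ⟨C.toNNReal, (convex_Ici 0).lipschitzOnWith_of_nnnorm_hasDerivWithin_le
    (fun t ht => (hu.hasDerivAt ht).hasDerivWithinAt) fun t ht => ?_⟩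
  exact NNReal.coe_le_coe.1 ((hC _ (hu.mem_sublevel hμ hWsymm ht)).trans (le_coe_toNNReal C))

theorem mem_sublevel_of_mapClusterPt {p : V → ℝ} (hp : MapClusterPt p atTop u) :
    p ∈ meanFieldSublevel μ W ρ h (expInt μ 1 (u 0)) (meanFieldEnergy μ W ρ h (u 0)) :=
  (isCompact_meanFieldSublevel hμ hW hρ h _ _).isClosed.mem_of_mapClusterPt hp <|
    (eventually_ge_atTop 0).mono fun _ ht => hu.mem_sublevel hμ hWsymm ht

theorem residual_eq_zero_of_mapClusterPt {p : V → ℝ} (hp : MapClusterPt p atTop u) :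
    meanFieldResidual μ W ρ h p = 0 := by
  let K := meanFieldSublevel μ W ρ h (expInt μ 1 (u 0)) (meanFieldEnergy μ W ρ h (u 0))
  have hK : IsCompact K := isCompact_meanFieldSublevel hμ hW hρ h _ _
  have hcont : ContinuousOn (meanFieldEnergy μ W ρ h) K := fun q hq =>
    (continuousAt_meanFieldEnergy μ W ρ hq.1).continuousWithinAt
  have hbdd : BddBelow ((fun t => meanFieldEnergy μ W ρ h (u t)) '' Set.Ici 0) :=
    (hK.bddBelow_image hcont).mono <| Set.image_subset_iff.2 fun t ht =>
      Set.mem_image_of_mem _ (hu.mem_sublevel hμ hWsymm ht)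
  have hpK := hu.mem_sublevel_of_mapClusterPt hμ hWsymm hW hρ hp
  obtain ⟨C, hC⟩ := hu.exists_lipschitzOnWith hμ hWsymm hW hρ
  exact meanFieldResidual_eq_zero_of_dissipation_nonpos hμ <|
    nonpos_of_mapClusterPt hC (fun _ ht => hu.hasDerivAt_energy hμ hWsymm ht)
      (fun _ _ => meanFieldDissipation_nonneg hμ W ρ h _) hbdd hp
      (continuousAt_meanFieldDissipation μ W ρ hpK.1)

theorem exists_tendsto : ∃ p, Tendsto u atTop (𝓝 p) := by
  obtain ⟨C, hC⟩ := hu.exists_lipschitzOnWith hμ hWsymm hW hρ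
  refine exists_tendsto_nhds_of_countable_mapClusterPt hC.continuousOn
    (isCompact_meanFieldSublevel hμ hW hρ h _ _)
    ((eventually_ge_atTop 0).mono fun _ ht => hu.mem_sublevel hμ hWsymm ht) ?_
  refine (countable_setOf_meanFieldResidual_eq_zero hμ hWsymm hW hρ.ne' h
    (expInt μ 1 (u 0))).mono fun p hp => ?_
  obtain ⟨hp₀, hpm, -⟩ := hu.mem_sublevel_of_mapClusterPt hμ hWsymm hW hρ hp
  exact ⟨hp₀, hpm, hu.residual_eq_zero_of_mapClusterPt hμ hWsymm hW hρ hp⟩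

end IsMeanFieldFlow

end MeanFieldEquation

theorem first_flow_convergence_general [Fintype V] [Nonempty V] [DecidableEq V]
    (μ : V → ℝ) (W : V → V → ℝ)
    (hμ : ∀ x, 0 < μ x)
    (hWsym : ∀ x y, W x y = W y x)
    (hWpos : ∀ x y, x ≠ y → 0 < W x y)
    (ρ : ℝ) (hρ : 0 < ρ)
    (h : V → ℝ)
    (u : ℝ → V → ℝ)
    (hne : ∀ t ∈ Set.Ici (0 : ℝ), intV μ (fun y => h y * Real.exp (u t y)) ≠ 0)
    (hflow : ∀ x, ∀ t ∈ Set.Ici (0 : ℝ),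
      HasDerivAt (fun s => Real.exp (u s x))
        (-(opL μ W (u t) x) +
          ρ * (h x * Real.exp (u t x) / intV μ (fun y => h y * Real.exp (u t y)) - 1 / volV μ))
        t) :
    ∃ u_inf : V → ℝ,
      TendstoUniformly (fun t x => u t x) u_inf Filter.atTop ∧
      ∀ x, opL μ W u_inf x =
        ρ * (h x * Real.exp (u_inf x) / intV μ (fun y => h y * Real.exp (u_inf y)) -
          1 / volV μ) := by
  have hu : IsMeanFieldFlow μ W ρ h u := ⟨hne, hflow⟩
  obtain ⟨p, hp⟩ := hu.exists_tendsto hμ hWsym hWpos hρ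
  have hres := hu.residual_eq_zero_of_mapClusterPt hμ hWsym hWpos hρ hp.mapClusterPt
  refine ⟨p, Metric.tendstoUniformly_iff.2 fun ε hε => ?_,
    fun x => meanFieldResidual_eq_zero_iff.1 (congrFun hres x)⟩
  filter_upwards [Metric.tendsto_nhds.1 hp ε hε] with t ht x
  exact (dist_le_pi_dist p (u t) x).trans_lt (dist_comm p (u t) ▸ ht)

/-- (Convergence of the first flow) The global solution of the first mean field flow converges
uniformly, as `t → +∞`, to a solution `u_∞` of the fractional mean field equation. -/
theorem first_flow_convergence [Fintype V] [Nonempty V] [DecidableEq V]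
    (μ : V → ℝ) (W : V → V → ℝ)
    (hμ : ∀ x, 0 < μ x)
    (hWsym : ∀ x y, W x y = W y x)
    (hWpos : ∀ x y, x ≠ y → 0 < W x y)
    (ρ : ℝ) (hρ : 0 < ρ)
    (h : V → ℝ) (hpos : ∃ x, 0 < h x) (hneg : ∃ x, h x < 0)
    (u₀ : V → ℝ) (hu₀ : intV μ (fun x => h x * Real.exp (u₀ x)) ≠ 0)
    (u : ℝ → V → ℝ) (hinit : u 0 = u₀)
    (hne : ∀ t ∈ Set.Ici (0 : ℝ), intV μ (fun y => h y * Real.exp (u t y)) ≠ 0)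
    (hflow : ∀ x, ∀ t ∈ Set.Ici (0 : ℝ),
      HasDerivAt (fun s => Real.exp (u s x))
        (-(opL μ W (u t) x) +
          ρ * (h x * Real.exp (u t x) / intV μ (fun y => h y * Real.exp (u t y)) - 1 / volV μ))
        t) :
    ∃ u_inf : V → ℝ,
      TendstoUniformly (fun t x => u t x) u_inf Filter.atTop ∧
      ∀ x, opL μ W u_inf x =
        ρ * (h x * Real.exp (u_inf x) / intV μ (fun y => h y * Real.exp (u_inf y)) - 1 / volV μ) := by
  exact first_flow_convergence_general μ W hμ hWsym hWpos ρ hρ h u hne hflow
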